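/- For all β>1, the critical value satisfies τ(β) ≤ 1 − 1/β, and equality τ(β) = 1 − 1/β holds if and only if β ∈ E_L := E ∪ {β_ℓ^s : s ∈ F_e}. -/

import Mathlib

open Set Filter MeasureTheory Topology

noncomputable section

/-- The β-transformation `x ↦ βx - ⌊βx⌋`. -/
def Tbeta (β x : ℝ) : ℝ := Int.fract (β * x)

/-- The survivor set `K_β(t)`: points of `[0,1)` whose orbit never enters `[0,t)`. -/
def survivor (β t : ℝ) : Set ℝ :=
  {x | x ∈ Set.Ico (0 : ℝ) 1 ∧ ∀ n : ℕ, t ≤ (Tbeta β)^[n] x}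

/-- The set-valued bifurcation set `E_β`. -/
def Ebif (β : ℝ) : Set ℝ :=
  {t | t ∈ Set.Ico (0 : ℝ) 1 ∧ ∀ t' : ℝ, t < t' → survivor β t' ≠ survivor β t}

/-- `(c)_β = Σ_{i≥1} c_i β^{-i}` for an infinite digit sequence (indexed from `0`). -/
def valSeq (β : ℝ) (c : ℕ → ℕ) : ℝ := ∑' i : ℕ, (c i : ℝ) / β ^ (i + 1)

/-- `(w 0^∞)_β` for a finite word `w`. -/
def valWord (β : ℝ) (w : List ℕ) : ℝ :=
  ∑ i ∈ Finset.range w.length, (w.getD i 0 : ℝ) / β ^ (i + 1)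

/-- `w⁺`: increment the last letter of `w`. -/
def wplus (w : List ℕ) : List ℕ := w.dropLast ++ [w.getLast! + 1]

/-- `w⁻`: decrement the last letter of `w`. -/
def wminus (w : List ℕ) : List ℕ := w.dropLast ++ [w.getLast! - 1]

/-- `θ`: increment every digit of `w` by one. -/
def theta (w : List ℕ) : List ℕ := w.map (· + 1)

/-- `L(w)`: the lexicographically largest cyclic permutation of `w`. -/
def maxCyc (w : List ℕ) : List ℕ := ((List.range w.length).map w.rotate).foldl max []

/-- `w^∞`: the periodic sequence with period block `w`. -/
def perSeq (w : List ℕ) : ℕ → ℕ := fun i => w.getD (i % w.length) 0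

/-- The sequence given by the word `w` followed by the sequence `c`. -/
def wordSeq (w : List ℕ) (c : ℕ → ℕ) : ℕ → ℕ :=
  fun i => if i < w.length then w.getD i 0 else c (i - w.length)

/-- Strict lexicographic order `≺` on sequences. -/
def seqLt (x y : ℕ → ℕ) : Prop := ∃ n, (∀ i < n, x i = y i) ∧ x n < y n

/-- Lexicographic order `≼` on sequences. -/
def seqLe (x y : ℕ → ℕ) : Prop := x = y ∨ seqLt x y

/-- The `n`-fold left shift `σⁿ` on sequences. -/
def shiftn (n : ℕ) (x : ℕ → ℕ) : ℕ → ℕ := fun i => x (i + n)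

/-- One step of the Farey recursion: insert the concatenation `w_i w_{i+1}`
between consecutive entries. -/
def fareyInsert : List (List ℕ) → List (List ℕ)
  | [] => []
  | [w] => [w]
  | w :: v :: rest => w :: (w ++ v) :: fareyInsert (v :: rest)

/-- The ordered set `F_n` of Farey words of level `n`. -/
def fareyLevel : ℕ → List (List ℕ)
  | 0 => [[0], [1]]
  | n + 1 => fareyInsert (fareyLevel n)

/-- `F`: all Farey words of length at least two. -/
def FareySet : Set (List ℕ) := {w | (∃ n, w ∈ fareyLevel n) ∧ w ≠ [0] ∧ w ≠ [1]}

/-- `F̂ = F ∪ {1}`. -/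
def FareyHat : Set (List ℕ) := FareySet ∪ {[1]}

/-- The extended Farey set `F_e = {θ^k(w) : w ∈ F̂, k ≥ 0}`. -/
def FareyExt : Set (List ℕ) := {w | ∃ v ∈ FareyHat, ∃ k : ℕ, w = theta^[k] v}

/-- A nonempty word is Lyndon iff it is strictly smaller than each of its nontrivial
cyclic rotations (equivalently: aperiodic and lexicographically smallest among its
cyclic permutations). -/
def IsLyndon (w : List ℕ) : Prop := w ≠ [] ∧ ∀ i, 0 < i → i < w.length → w < w.rotate i

/-- `L_e`: all Lyndon words over `ℕ ∪ {0}` except the single-letter word `0`. -/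
def LyndonExt : Set (List ℕ) := {w | IsLyndon w ∧ w ≠ [0]}

/-- `L`: Lyndon words over `{0,1}` of length at least `2`. -/
def LyndonBin : Set (List ℕ) := {w | IsLyndon w ∧ 2 ≤ w.length ∧ ∀ d ∈ w, d ≤ 1}

/-- The block of `Φ_s` emitted for current digit `d` after previous digit `p`:
`L(s)` for `00`, `s⁻` for `10`, `L(s)⁺` for `01`, `s` for `11`. -/
def phiBlock (s : List ℕ) (p d : ℕ) : List ℕ :=
  if d = 0 then (if p = 0 then maxCyc s else wminus s)
  else (if p = 0 then wplus (maxCyc s) else s)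

def phiAux (s : List ℕ) : ℕ → List ℕ → List ℕ
  | _, [] => []
  | p, d :: rest => phiBlock s p d ++ phiAux s d rest

/-- The substitution `Φ_s` on finite words; `s • r = subst s r`.  An initial digit `0`
produces `s⁻`, an initial digit `1` produces `L(s)⁺`, and thereafter runs
`0^k` resp. `1^l` produce `L(s)^{k-1}` resp. `s^{l-1}`, in accordance with
`Φ_s(0^{k₁}1^{l₁}…) = s⁻ L(s)^{k₁-1} L(s)⁺ s^{l₁-1} …` and
`Φ_s(1^{k₁}0^{l₁}…) = L(s)⁺ s^{k₁-1} s⁻ L(s)^{l₁-1} …`. -/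
def subst (s r : List ℕ) : List ℕ :=
  match r with
  | [] => []
  | d :: rest => phiBlock s (1 - d) d ++ phiAux s d rest

/-- The substitution `Φ_s` on infinite sequences, as the limit of its values
on initial segments (each digit contributes a nonempty block, so the `i`-th letter
is determined by the first `i+1` digits). -/
def phiSeq (s : List ℕ) (c : ℕ → ℕ) : ℕ → ℕ :=
  fun i => (subst s (List.ofFn fun j : Fin (i + 1) => c j)).getD i 0

/-- `Λ_e(m) = {s₁ • s₂ • … • s_m : s₁ ∈ F_e, s₂,…,s_m ∈ F}`. -/
def LambdaE (m : ℕ) : Set (List ℕ) :=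
  {w | ∃ s₁ ∈ FareyExt, ∃ rs : List (List ℕ),
    rs.length = m - 1 ∧ (∀ r ∈ rs, r ∈ FareySet) ∧ w = rs.foldl subst s₁}

/-- `Λ_e = ∪_{m≥1} Λ_e(m)`. -/
def LambdaExt : Set (List ℕ) := ⋃ m ∈ Set.Ici 1, LambdaE m

/-- `β_ℓ^S`: the base `β > 1` with `(L(S)^∞)_β = 1` (it is unique since
`β ↦ (c)_β` is strictly decreasing). -/
def betaL (S : List ℕ) : ℝ :=
  Classical.epsilon fun β : ℝ => 1 < β ∧ valSeq β (perSeq (maxCyc S)) = 1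

/-- `β_*^S`: the base `β > 1` with `(L(S)⁺ S⁻ L(S)^∞)_β = 1`. -/
def betaStar (S : List ℕ) : ℝ :=
  Classical.epsilon fun β : ℝ =>
    1 < β ∧ valSeq β (wordSeq (wplus (maxCyc S) ++ wminus S) (perSeq (maxCyc S))) = 1

/-- `β_r^S`: the base `β > 1` with `(L(S)⁺ S^∞)_β = 1`. -/
def betaR (S : List ℕ) : ℝ :=
  Classical.epsilon fun β : ℝ => 1 < β ∧ valSeq β (wordSeq (wplus (maxCyc S)) (perSeq S)) = 1

/-- The Lyndon/Farey interval `J^S = [β_ℓ^S, β_r^S]`. -/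
def Jint (S : List ℕ) : Set ℝ := Set.Icc (betaL S) (betaR S)

/-- The basic interval `I^S = [β_ℓ^S, β_*^S]`. -/
def Iint (S : List ℕ) : Set ℝ := Set.Icc (betaL S) (betaStar S)

/-- The exceptional set `E = (1,∞) ∖ ∪_{s ∈ F_e} J^s`. -/
def Eexc : Set ℝ := Set.Ioi 1 \ ⋃ s ∈ FareyExt, Jint s

/-- The relative exceptional set `E^S = (J^S ∖ I^S) ∖ ∪_{r ∈ F} J^{S•r}`. -/
def EexcRel (S : List ℕ) : Set ℝ :=
  (Jint S \ Iint S) \ ⋃ r ∈ FareySet, Jint (subst S r)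

/-- The infinitely renormalizable set `E_∞ = ∩_{m≥1} ∪_{S ∈ Λ_e(m)} J^S`. -/
def Einf : Set ℝ := ⋂ m ∈ Set.Ici 1, ⋃ S ∈ LambdaE m, Jint S

/-- `E_L = E ∪ {β_ℓ^s : s ∈ F_e}`. -/
def EL : Set ℝ := Eexc ∪ {x | ∃ s ∈ FareyExt, x = betaL s}

/-- The critical value `τ(β) = min{t > 0 : dim_H K_β(t) = 0}`. -/
def tau (β : ℝ) : ℝ := sInf {t : ℝ | 0 < t ∧ dimH (survivor β t) = 0}

end

/-!
Multiplication by `β` maps the survivor set at level `1 - 1/β` into an interval of length one.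
Passing from one order to the next, the cylinders that meet the survivor set are therefore cut
by a single point; their number grows linearly, and the dimension is zero.

Write `lowerVal β x` and `upperVal β x` for the values in base `β` of the lower and upper mechanical
sequences of slope `x`. The map `x ↦ upperVal β x` is strictly increasing, and
`upperVal β x = lowerVal β x + 1/β` for irrational `x`. Hence either `upperVal β a = 1` for some
slope `a`, or there is a rational slope `k/n` with `upperVal β (k/n) < 1 ≤ lowerVal β (k/n) + 1/β`.
In the first case, below any level `t < 1 - 1/β` there is room to choose the slope freely, block by
block, among two slopes slightly smaller than `a`; this gives a survivor set of positive dimension.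
In the second case the periodic point `lowerVal β (k/n)` repels orbits, so the survivor set does not
change on a whole range of levels below it.

The extended Farey words are exactly the lower mechanical words `s` of positive rational slope
`k/n`, and `L(s)` is the upper mechanical word of the same slope. Thus
`(L(s)^∞)_β = upperVal β (k/n)` and `(L(s)^+ s^∞)_β = lowerVal β (k/n) + 1/β`, and by monotonicity
in `β` the dichotomy reads `β ∈ E_L` against `β ∈ J^s \ {β_ℓ^s}`.
-/

/-! ### Abel sums -/

section AbelSum

variable {β : ℝ} {f g : ℕ → ℝ}

/-- Summability of the power series with coefficients `f` at `1 / β`. -/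
def AbelSummable (β : ℝ) (f : ℕ → ℝ) : Prop := Summable fun j : ℕ => f j / β ^ j

/-- `(1 - 1/β) Σ_j f(j) β^{-j}`. Summation by parts turns it into `Σ_j (f(j+1) - f(j)) β^{-(j+1)}`
when `f 0 = 0`, so it is the value in base `β` of the digit sequence with partial sums `f`. -/
noncomputable def abelSum (β : ℝ) (f : ℕ → ℝ) : ℝ := (1 - 1 / β) * ∑' j : ℕ, f j / β ^ j

lemma one_sub_one_div_pos (hβ : 1 < β) : 0 < 1 - 1 / β :=
  sub_pos.2 ((div_lt_one (one_pos.trans hβ)).2 hβ)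

lemma norm_inv_lt_one (hβ : 1 < β) : ‖β⁻¹‖ < 1 := by
  rw [norm_inv, Real.norm_of_nonneg (one_pos.trans hβ).le]
  exact inv_lt_one_of_one_lt₀ hβ

lemma abelSummable_succ (hβ : 1 < β) : AbelSummable β fun j => (j : ℝ) + 1 := by
  refine ((summable_pow_mul_geometric_of_norm_lt_one 1 (norm_inv_lt_one hβ)).add
    (summable_pow_mul_geometric_of_norm_lt_one 0 (norm_inv_lt_one hβ))).congr fun j => ?_
  simp only [pow_one, pow_zero, inv_pow, div_eq_mul_inv, add_mul]

lemma norm_div_pow_le {A a : ℝ} (hβ : 1 < β) {j : ℕ} (h : |a| ≤ A * ((j : ℝ) + 1)) :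
    ‖a / β ^ j‖ ≤ A * (((j : ℝ) + 1) / β ^ j) := by
  have hp : 0 < β ^ j := pow_pos (one_pos.trans hβ) j
  rw [Real.norm_eq_abs, abs_div, abs_of_pos hp, ← mul_div_assoc]
  gcongr

lemma AbelSummable.of_abs_le (hβ : 1 < β) (A : ℝ) (h : ∀ j : ℕ, |f j| ≤ A * ((j : ℝ) + 1)) :
    AbelSummable β f :=
  .of_norm_bounded ((abelSummable_succ hβ).mul_left A) fun j => norm_div_pow_le hβ (h j)

lemma abelSummable_const (hβ : 1 < β) (c : ℝ) : AbelSummable β fun _ => c := by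
  refine .of_abs_le hβ |c| fun j => ?_
  nlinarith [abs_nonneg c, Nat.cast_nonneg (α := ℝ) j]

lemma abelSummable_natCast_mul (hβ : 1 < β) (x : ℝ) : AbelSummable β fun j => (j : ℝ) * x := by
  refine .of_abs_le hβ |x| fun j => ?_
  rw [abs_mul, Nat.abs_cast]
  nlinarith [abs_nonneg x]

lemma AbelSummable.add (hf : AbelSummable β f) (hg : AbelSummable β g) :
    AbelSummable β fun j => f j + g j := by
  simpa only [AbelSummable, add_div] using Summable.add hf hg

lemma AbelSummable.sub (hf : AbelSummable β f) (hg : AbelSummable β g) :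
    AbelSummable β fun j => f j - g j := by
  simpa only [AbelSummable, sub_div] using Summable.sub hf hg

lemma AbelSummable.of_le_of_le {h : ℕ → ℝ} (hβ : 1 < β) (hf : AbelSummable β f)
    (hh : AbelSummable β h) (hfg : ∀ j, f j ≤ g j) (hgh : ∀ j, g j ≤ h j) : AbelSummable β g := by
  have hp (j : ℕ) : 0 ≤ β ^ j := (pow_pos (one_pos.trans hβ) j).le
  have hgf : AbelSummable β fun j => g j - f j :=
    .of_nonneg_of_le (fun j => div_nonneg (sub_nonneg.2 (hfg j)) (hp j))
      (fun j => div_le_div_of_nonneg_right (sub_le_sub_right (hgh j) _) (hp j)) (hh.sub hf)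
  simpa only [sub_add_cancel] using hgf.add hf

lemma AbelSummable.shift (hβ : 1 < β) (hf : AbelSummable β f) (a : ℕ) :
    AbelSummable β fun j => f (a + j) := by
  refine (((summable_nat_add_iff a).2 hf).mul_left (β ^ a)).congr fun j => ?_
  have : β ^ a ≠ 0 := (pow_pos (one_pos.trans hβ) a).ne'
  rw [add_comm j a, pow_add]
  field_simp

lemma abelSum_add (hf : AbelSummable β f) (hg : AbelSummable β g) :
    abelSum β (fun j => f j + g j) = abelSum β f + abelSum β g := by
  simp only [abelSum, add_div, ← mul_add, Summable.tsum_add hf hg]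

lemma abelSum_neg (β : ℝ) (f : ℕ → ℝ) : abelSum β (fun j => -f j) = -abelSum β f := by
  simp only [abelSum, neg_div, tsum_neg, mul_neg]

lemma abelSum_sub (hf : AbelSummable β f) (hg : AbelSummable β g) :
    abelSum β (fun j => f j - g j) = abelSum β f - abelSum β g := by
  simp only [abelSum, sub_div, ← mul_sub, Summable.tsum_sub hf hg]

lemma abelSum_const (hβ : 1 < β) (c : ℝ) : abelSum β (fun _ => c) = c := by
  have h : ∑' j : ℕ, c / β ^ j = c * (1 - 1 / β)⁻¹ := by
    simp_rw [div_eq_mul_inv, ← inv_pow, one_mul]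
    rw [tsum_mul_left, tsum_geometric_of_norm_lt_one (norm_inv_lt_one hβ)]
  rw [abelSum, h, mul_left_comm, mul_inv_cancel₀ (one_sub_one_div_pos hβ).ne', mul_one]

lemma abelSum_sub_const (hβ : 1 < β) (hf : AbelSummable β f) (c : ℝ) :
    abelSum β (fun j => f j - c) = abelSum β f - c := by
  rw [abelSum_sub hf (abelSummable_const hβ c), abelSum_const hβ]

lemma abelSum_natCast_mul (hβ : 1 < β) (x : ℝ) :
    abelSum β (fun j => (j : ℝ) * x) = x / (β - 1) := by
  have h : ∑' j : ℕ, (j : ℝ) * x / β ^ j = x * (β⁻¹ / (1 - β⁻¹) ^ 2) := by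
    rw [← tsum_coe_mul_geometric_of_norm_lt_one (norm_inv_lt_one hβ), ← tsum_mul_left]
    refine tsum_congr fun j => ?_
    rw [inv_pow]
    ring
  have : β ≠ 0 := (one_pos.trans hβ).ne'
  have : β - 1 ≠ 0 := (sub_pos.2 hβ).ne'
  rw [abelSum, h]
  field_simp

lemma abelSum_mono (hβ : 1 < β) (hf : AbelSummable β f) (hg : AbelSummable β g)
    (h : ∀ j, f j ≤ g j) : abelSum β f ≤ abelSum β g := by
  refine mul_le_mul_of_nonneg_left ?_ (one_sub_one_div_pos hβ).le
  exact Summable.tsum_le_tsum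
    (fun j => div_le_div_of_nonneg_right (h j) (pow_pos (one_pos.trans hβ) j).le) hf hg

lemma abelSum_lt_abelSum (hβ : 1 < β) (hf : AbelSummable β f) (hg : AbelSummable β g)
    (h : ∀ j, f j ≤ g j) {i : ℕ} (hi : f i < g i) : abelSum β f < abelSum β g := by
  refine mul_lt_mul_of_pos_left ?_ (one_sub_one_div_pos hβ)
  have hp (j : ℕ) : 0 < β ^ j := pow_pos (one_pos.trans hβ) j
  exact Summable.tsum_lt_tsum (fun j => div_le_div_of_nonneg_right (h j) (hp j).le)
    (div_lt_div_of_pos_right hi (hp i)) hf hg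

lemma abelSum_eq_sum_range_add (hf : AbelSummable β f) (n : ℕ) :
    abelSum β f = (1 - 1 / β) * ∑ j ∈ Finset.range n, f j / β ^ j
      + abelSum β (fun j => f (n + j)) / β ^ n := by
  have htail : ∑' j, f (j + n) / β ^ (j + n) = (∑' j, f (n + j) / β ^ j) / β ^ n := by
    rw [← tsum_div_const]
    refine tsum_congr fun j => ?_
    rw [add_comm j n, pow_add, mul_comm, div_div]
  rw [abelSum, ← Summable.sum_add_tsum_nat_add n hf, htail, mul_add, mul_div_assoc', abelSum]

lemma tendsto_abelSum (hβ : 1 < β) {ι : Type*} {l : Filter ι} {F : ι → ℕ → ℝ} {A : ℝ}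
    (hA : ∀ᶠ x in l, ∀ j : ℕ, |F x j| ≤ A * ((j : ℝ) + 1))
    (hF : ∀ j, Tendsto (F · j) l (𝓝 (f j))) :
    Tendsto (fun x => abelSum β (F x)) l (𝓝 (abelSum β f)) := by
  refine .const_mul _ (tendsto_tsum_of_dominated_convergence
    ((abelSummable_succ hβ).mul_left A) (fun j => (hF j).div_const _) ?_)
  filter_upwards [hA] with x hx j using norm_div_pow_le hβ (hx j)

lemma abelSummable_ite (hβ : 1 < β) (P : ℕ → Prop) [DecidablePred P] (a b : ℝ) :
    AbelSummable β fun j => if P j then a else b := by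
  refine .of_abs_le hβ (max |a| |b|) fun j => ?_
  have hab : |if P j then a else b| ≤ max |a| |b| := by split_ifs <;> simp
  nlinarith [(abs_nonneg _).trans hab, Nat.cast_nonneg (α := ℝ) j]

lemma abelSum_ite_eq_zero (hβ : 1 < β) :
    abelSum β (fun j => if j = 0 then 0 else 1) = 1 / β := by
  simp [abelSum_eq_sum_range_add (abelSummable_ite hβ _ 0 1) 1, add_comm 1, abelSum_const hβ]

lemma valSeq_eq_abelSum (hβ : 1 < β) {c : ℕ → ℕ} (hf : AbelSummable β f) (h0 : f 0 = 0)
    (hc : ∀ i, (c i : ℝ) = f (i + 1) - f i) : valSeq β c = abelSum β f := by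
  have hβ0 : β ≠ 0 := (one_pos.trans hβ).ne'
  have hs : AbelSummable β fun j => f (j + 1) := by
    simpa only [add_comm] using hf.shift hβ 1
  have hval : valSeq β c = (∑' j, (f (j + 1) - f j) / β ^ j) / β := by
    rw [valSeq, ← tsum_div_const]
    refine tsum_congr fun j => ?_
    rw [hc, pow_succ, div_div]
  have hshift : abelSum β f = abelSum β (fun j => f (j + 1)) / β := by
    simp [abelSum_eq_sum_range_add hf 1, h0, add_comm 1]
  have hdiff := abelSum_sub hs hf
  rw [eq_div_iff hβ0] at hshift
  have hβ1 : (1 - 1 / β) ≠ 0 := (one_sub_one_div_pos hβ).ne'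
  rw [hval, div_eq_iff hβ0]
  refine mul_left_cancel₀ hβ1 (hdiff.trans ?_)
  rw [← hshift]
  field_simp

end AbelSum

/-! ### Values of mechanical sequences -/

section MechanicalValue

variable {β : ℝ}

/-- The value in base `β` of the lower mechanical sequence `⌊(i + 1) x⌋ - ⌊i x⌋` of slope `x`. -/
noncomputable def lowerVal (β x : ℝ) : ℝ := abelSum β fun j => (⌊(j : ℝ) * x⌋ : ℝ)

/-- The value in base `β` of the upper mechanical sequence `⌈(i + 1) x⌉ - ⌈i x⌉` of slope `x`. -/
noncomputable def upperVal (β x : ℝ) : ℝ := abelSum β fun j => (⌈(j : ℝ) * x⌉ : ℝ)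

lemma abs_ceil_natCast_mul_le {x A : ℝ} (hx : |x| ≤ A) (j : ℕ) :
    |(⌈(j : ℝ) * x⌉ : ℝ)| ≤ (A + 1) * ((j : ℝ) + 1) := by
  have : (0 : ℝ) ≤ j := Nat.cast_nonneg j
  obtain ⟨h₁, h₂⟩ := abs_le.1 hx
  have := Int.le_ceil ((j : ℝ) * x)
  have := Int.ceil_lt_add_one ((j : ℝ) * x)
  rw [abs_le]
  constructor <;> nlinarith

lemma abelSummable_ceil (hβ : 1 < β) (x : ℝ) : AbelSummable β fun j => (⌈(j : ℝ) * x⌉ : ℝ) :=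
  .of_abs_le hβ _ (abs_ceil_natCast_mul_le le_rfl)

lemma abelSummable_floor (hβ : 1 < β) (x : ℝ) : AbelSummable β fun j => (⌊(j : ℝ) * x⌋ : ℝ) := by
  refine .of_abs_le hβ (|x| + 1) fun j => ?_
  have h := abs_ceil_natCast_mul_le (x := -x) (A := |x|) (abs_neg x).le j
  rwa [mul_neg, Int.ceil_neg, Int.cast_neg, abs_neg] at h

lemma lowerVal_neg (β x : ℝ) : lowerVal β (-x) = -upperVal β x := by
  simp only [lowerVal, upperVal, mul_neg, Int.floor_neg, Int.cast_neg, abelSum_neg]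

lemma abelSummable_floor_add_ite (hβ : 1 < β) (x : ℝ) :
    AbelSummable β fun j => (⌊(j : ℝ) * x⌋ : ℝ) + if j = 0 then 0 else 1 :=
  (abelSummable_floor hβ x).add (abelSummable_ite hβ _ 0 1)

lemma lowerVal_add_one_div (hβ : 1 < β) (x : ℝ) :
    lowerVal β x + 1 / β = abelSum β fun j => (⌊(j : ℝ) * x⌋ : ℝ) + if j = 0 then 0 else 1 := by
  rw [abelSum_add (abelSummable_floor hβ x) (abelSummable_ite hβ _ 0 1), abelSum_ite_eq_zero hβ,
    lowerVal]

lemma upperVal_le_lowerVal_add (hβ : 1 < β) (x : ℝ) :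
    upperVal β x ≤ lowerVal β x + 1 / β := by
  rw [lowerVal_add_one_div hβ]
  refine abelSum_mono hβ (abelSummable_ceil hβ x) (abelSummable_floor_add_ite hβ x) fun j => ?_
  split_ifs with hj
  · simp [hj]
  · exact_mod_cast Int.ceil_le_floor_add_one _

lemma lowerVal_add_lt_upperVal (hβ : 1 < β) {x y : ℝ} (h : x < y) :
    lowerVal β x + 1 / β < upperVal β y := by
  rw [lowerVal_add_one_div hβ]
  obtain ⟨i, hi⟩ := exists_nat_gt (1 / (y - x))
  rw [div_lt_iff₀ (sub_pos.2 h)] at hi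
  have hi0 : i ≠ 0 := by
    rintro rfl
    simp [zero_lt_one.not_gt] at hi
  refine abelSum_lt_abelSum (i := i) hβ (abelSummable_floor_add_ite hβ x) (abelSummable_ceil hβ y)
    (fun j => ?_) ?_
  · split_ifs with hj
    · simp [hj]
    · have hj' : (0 : ℝ) < j := Nat.cast_pos.2 (Nat.pos_of_ne_zero hj)
      have : ⌊(j : ℝ) * x⌋ < ⌈(j : ℝ) * y⌉ :=
        Int.floor_lt_ceil_of_lt (mul_lt_mul_of_pos_left h hj')
      exact_mod_cast this
  · rw [if_neg hi0]
    linarith [Int.floor_le ((i : ℝ) * x), Int.le_ceil ((i : ℝ) * y)]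

lemma lowerVal_add_eq_upperVal_of_irrational (hβ : 1 < β) {x : ℝ} (hx : Irrational x) :
    lowerVal β x + 1 / β = upperVal β x := by
  rw [lowerVal_add_one_div hβ, upperVal]
  congr 1 with j
  split_ifs with hj
  · simp [hj]
  · have h : ⌈(j : ℝ) * x⌉ = ⌊(j : ℝ) * x⌋ + 1 := by
      refine (Int.ceil_eq_floor_add_one_iff_notMem _).2 ?_
      rintro ⟨z, hz⟩
      exact (hx.natCast_mul hj).ne_int z hz.symm
    exact_mod_cast h.symm

lemma upperVal_strictMono (hβ : 1 < β) : StrictMono (upperVal β) := fun x _ h =>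
  (upperVal_le_lowerVal_add hβ x).trans_lt (lowerVal_add_lt_upperVal hβ h)

lemma le_upperVal (hβ : 1 < β) (x : ℝ) : x / (β - 1) ≤ upperVal β x := by
  rw [← abelSum_natCast_mul hβ]
  exact abelSum_mono hβ (abelSummable_natCast_mul hβ x) (abelSummable_ceil hβ x) fun _ =>
    Int.le_ceil _

lemma lowerVal_le (hβ : 1 < β) (x : ℝ) : lowerVal β x ≤ x / (β - 1) := by
  have h := le_upperVal hβ (-x)
  have hneg := lowerVal_neg β (-x)
  rw [neg_neg] at hneg
  rw [neg_div] at h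
  linarith

lemma tendsto_upperVal_left (hβ : 1 < β) (a : ℝ) :
    Tendsto (upperVal β) (𝓝[<] a) (𝓝 (upperVal β a)) := by
  refine tendsto_abelSum (A := |a| + 1 + 1) hβ ?_ fun j => ?_
  · filter_upwards [nhdsWithin_le_nhds (continuous_abs.continuousAt.eventually_lt_const
      (lt_add_one |a|))] with x hx j using abs_ceil_natCast_mul_le hx.le j
  · have hceil : (⌈(j : ℝ) * a⌉ : ℝ) - 1 < j * a := by
      linarith [Int.ceil_lt_add_one ((j : ℝ) * a)]
    refine tendsto_nhds_of_eventually_eq ?_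
    filter_upwards [nhdsWithin_le_nhds ((continuous_const_mul (j : ℝ)).continuousAt.eventually
      (lt_mem_nhds hceil)), self_mem_nhdsWithin] with x hx (hxa : x < a)
    rw [Int.cast_inj, Int.ceil_eq_iff]
    exact ⟨hx, (by gcongr : (j : ℝ) * x ≤ j * a).trans (Int.le_ceil _)⟩

lemma tendsto_lowerVal_right (hβ : 1 < β) (a : ℝ) :
    Tendsto (lowerVal β) (𝓝[>] a) (𝓝 (lowerVal β a)) := by
  have h : lowerVal β = fun x => -upperVal β (-x) :=
    funext fun x => by rw [← lowerVal_neg, neg_neg]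
  rw [h]
  exact ((tendsto_upperVal_left hβ (-a)).comp tendsto_neg_nhdsGT).neg

lemma exists_upperVal_le_one_le_lowerVal_add (hβ : 1 < β) :
    ∃ a, upperVal β a ≤ 1 ∧ 1 ≤ lowerVal β a + 1 / β := by
  set Z : Set ℝ := {x | upperVal β x ≤ 1} with hZ
  have hbdd : BddAbove Z := by
    refine ⟨β - 1, fun x hx => ?_⟩
    have h := (le_upperVal hβ x).trans hx
    rwa [div_le_one (sub_pos.2 hβ)] at h
  have hne : Z.Nonempty := ⟨0, by simp [hZ, upperVal, abelSum_const hβ]⟩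
  refine ⟨sSup Z, le_of_tendsto (tendsto_upperVal_left hβ _) ?_,
    ge_of_tendsto ((tendsto_lowerVal_right hβ _).add_const _) ?_⟩
  · filter_upwards [self_mem_nhdsWithin] with x hx
    obtain ⟨y, hy, hxy⟩ := exists_lt_of_lt_csSup hne hx
    exact ((upperVal_strictMono hβ).monotone hxy.le).trans hy
  · filter_upwards [self_mem_nhdsWithin] with x hx
    have hxZ : x ∉ Z := notMem_of_csSup_lt hx hbdd
    exact (not_le.1 hxZ).le.trans (upperVal_le_lowerVal_add hβ x)

lemma exists_coprime_div_eq {x : ℝ} (hx : 0 < x) (hrat : ¬Irrational x) :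
    ∃ k n : ℕ, 0 < k ∧ 0 < n ∧ k.Coprime n ∧ x = k / n := by
  obtain ⟨q, rfl⟩ := not_not.1 hrat
  have hq : 0 < q.num := Rat.num_pos.2 (Rat.cast_pos.1 hx)
  refine ⟨q.num.natAbs, q.den, Int.natAbs_pos.2 hq.ne', q.den_pos, q.reduced, ?_⟩
  rw [Nat.cast_natAbs, abs_of_pos hq, ← Rat.cast_def]

lemma exists_upperVal_eq_one_or_jump (hβ : 1 < β) :
    (∃ a, upperVal β a = 1) ∨ ∃ k n : ℕ, 0 < k ∧ 0 < n ∧ k.Coprime n ∧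
      upperVal β (k / n) < 1 ∧ 1 ≤ lowerVal β (k / n) + 1 / β := by
  obtain ⟨a, hupper, hlower⟩ := exists_upperVal_le_one_le_lowerVal_add hβ
  refine hupper.eq_or_lt.imp (fun h => ⟨a, h⟩) fun hlt => ?_
  have ha : 0 < a := by
    have h := (one_sub_one_div_pos hβ).trans_le ((sub_le_iff_le_add.2 hlower).trans
      (lowerVal_le hβ a))
    exact (div_pos_iff_of_pos_right (sub_pos.2 hβ)).1 h
  have hrat : ¬Irrational a := fun hirr =>
    (hlower.trans_eq (lowerVal_add_eq_upperVal_of_irrational hβ hirr)).not_gt hlt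
  obtain ⟨k, n, hk, hn, hkn, rfl⟩ := exists_coprime_div_eq ha hrat
  exact ⟨k, n, hk, hn, hkn, hlt, hlower⟩

lemma exists_lt_lowerVal_upperVal_lt_one {a t : ℝ} (hβ : 1 < β) (ha : upperVal β a = 1)
    (ht : t < 1 - 1 / β) : ∃ x₁ x₂, x₁ < x₂ ∧ t ≤ lowerVal β x₁ ∧ upperVal β x₂ < 1 := by
  have ht' : t + 1 / β < upperVal β a := by linarith
  obtain ⟨x₁, hx₁, hx₁a : x₁ < a⟩ := (((tendsto_upperVal_left hβ a).eventually
    (lt_mem_nhds ht')).and self_mem_nhdsWithin).exists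
  obtain ⟨x₂, hx₁₂, hx₂a⟩ := exists_between hx₁a
  refine ⟨x₁, x₂, hx₁₂, ?_, ha ▸ upperVal_strictMono hβ hx₂a⟩
  linarith [upperVal_le_lowerVal_add hβ x₁]

end MechanicalValue

/-! ### Orbits coded by floors of paths -/

section FloorVal

variable {β x₁ x₂ : ℝ} {p : ℕ → ℝ}

/-- All increments of the path `p` lie between the slopes `x₁` and `x₂`. -/
def IsSlopePath (x₁ x₂ : ℝ) (p : ℕ → ℝ) : Prop := ∀ i, p (i + 1) - p i ∈ Icc x₁ x₂

/-- The value in base `β` of the digit sequence `⌊p (i + 1)⌋ - ⌊p i⌋`, read from time `a` on. -/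
noncomputable def floorVal (β : ℝ) (p : ℕ → ℝ) (a : ℕ) : ℝ :=
  abelSum β fun j => (⌊p (a + j)⌋ : ℝ) - ⌊p a⌋

lemma isSlopePath_natCast_mul (x : ℝ) : IsSlopePath x x fun j => (j : ℝ) * x := fun j => by
  simp [add_mul]

lemma IsSlopePath.sub_mem_Icc (hp : IsSlopePath x₁ x₂ p) (a j : ℕ) :
    p (a + j) - p a ∈ Icc (j * x₁) (j * x₂) := by
  induction j with
  | zero => simp
  | succ j ih =>
    obtain ⟨h₁, h₂⟩ := hp (a + j)
    rw [← add_assoc]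
    push_cast
    constructor <;> linarith [ih.1, ih.2]

lemma IsSlopePath.floor_le_floor_sub (hp : IsSlopePath x₁ x₂ p) (a j : ℕ) :
    (⌊(j : ℝ) * x₁⌋ : ℝ) ≤ ⌊p (a + j)⌋ - ⌊p a⌋ := by
  have h : ⌊p a⌋ + ⌊(j : ℝ) * x₁⌋ ≤ ⌊p (a + j)⌋ :=
    (Int.le_floor_add _ _).trans (Int.floor_le_floor (by linarith [(hp.sub_mem_Icc a j).1]))
  rw [le_sub_iff_add_le']
  exact_mod_cast h

lemma IsSlopePath.floor_sub_le_ceil (hp : IsSlopePath x₁ x₂ p) (a j : ℕ) :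
    (⌊p (a + j)⌋ : ℝ) - ⌊p a⌋ ≤ ⌈(j : ℝ) * x₂⌉ := by
  have h : ⌊p (a + j)⌋ ≤ ⌊p a⌋ + ⌈(j : ℝ) * x₂⌉ := by
    rw [← Int.floor_add_intCast]
    exact Int.floor_le_floor
      (by linarith [(hp.sub_mem_Icc a j).2, Int.le_ceil ((j : ℝ) * x₂)])
  rw [sub_le_iff_le_add']
  exact_mod_cast h

lemma IsSlopePath.abelSummable_floor_sub (hβ : 1 < β) (hp : IsSlopePath x₁ x₂ p) (a : ℕ) :
    AbelSummable β fun j => (⌊p (a + j)⌋ : ℝ) - ⌊p a⌋ :=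
  .of_le_of_le hβ (abelSummable_floor hβ x₁) (abelSummable_ceil hβ x₂)
    (hp.floor_le_floor_sub a) (hp.floor_sub_le_ceil a)

lemma IsSlopePath.floorVal_mem_Icc (hβ : 1 < β) (hp : IsSlopePath x₁ x₂ p) (a : ℕ) :
    floorVal β p a ∈ Icc (lowerVal β x₁) (upperVal β x₂) :=
  ⟨abelSum_mono hβ (abelSummable_floor hβ x₁) (hp.abelSummable_floor_sub hβ a)
      (hp.floor_le_floor_sub a),
    abelSum_mono hβ (hp.abelSummable_floor_sub hβ a) (abelSummable_ceil hβ x₂)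
      (hp.floor_sub_le_ceil a)⟩

lemma floorVal_eq_sum_range_add (hβ : 1 < β) (hp : IsSlopePath x₁ x₂ p) (a b : ℕ) :
    floorVal β p a = (1 - 1 / β) * ∑ j ∈ Finset.range b, ((⌊p (a + j)⌋ : ℝ) - ⌊p a⌋) / β ^ j
      + ((⌊p (a + b)⌋ : ℝ) - ⌊p a⌋ + floorVal β p (a + b)) / β ^ b := by
  have htail : abelSum β (fun j => (⌊p (a + (b + j))⌋ : ℝ) - ⌊p a⌋)
      = ⌊p (a + b)⌋ - ⌊p a⌋ + floorVal β p (a + b) := by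
    rw [floorVal, add_comm, ← sub_eq_iff_eq_add,
      ← abelSum_sub_const hβ ((hp.abelSummable_floor_sub hβ a).shift hβ b)]
    congr 1 with j
    rw [add_assoc]
    ring
  rw [floorVal, abelSum_eq_sum_range_add (hp.abelSummable_floor_sub hβ a) b, htail]

lemma mul_floorVal (hβ : 1 < β) (hp : IsSlopePath x₁ x₂ p) (a : ℕ) :
    β * floorVal β p a = floorVal β p (a + 1) + (⌊p (a + 1)⌋ - ⌊p a⌋ : ℤ) := by
  have : β ≠ 0 := (one_pos.trans hβ).ne'
  rw [floorVal_eq_sum_range_add hβ hp a 1]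
  simp only [Finset.range_one, Finset.sum_singleton, add_zero, sub_self, zero_div, mul_zero,
    zero_add, pow_one]
  push_cast
  field_simp
  ring

lemma IsSlopePath.iterate_Tbeta_floorVal (hβ : 1 < β) (hp : IsSlopePath x₁ x₂ p)
    (h₁ : 0 ≤ lowerVal β x₁) (h₂ : upperVal β x₂ < 1) (n : ℕ) :
    (Tbeta β)^[n] (floorVal β p 0) = floorVal β p n := by
  induction n with
  | zero => rfl
  | succ n ih =>
    have h := hp.floorVal_mem_Icc hβ (n + 1)
    rw [Function.iterate_succ_apply', ih, Tbeta, mul_floorVal hβ hp, Int.fract_add_intCast,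
      Int.fract_eq_self]
    exact ⟨h₁.trans h.1, h.2.trans_lt h₂⟩

lemma IsSlopePath.floorVal_mem_survivor {t : ℝ} (hβ : 1 < β) (hp : IsSlopePath x₁ x₂ p)
    (ht : 0 ≤ t) (h₁ : t ≤ lowerVal β x₁) (h₂ : upperVal β x₂ < 1) :
    floorVal β p 0 ∈ survivor β t := by
  have h₀ := ht.trans h₁
  refine ⟨⟨h₀.trans (hp.floorVal_mem_Icc hβ 0).1, (hp.floorVal_mem_Icc hβ 0).2.trans_lt h₂⟩,
    fun n => ?_⟩
  rw [hp.iterate_Tbeta_floorVal hβ h₀ h₂]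
  exact h₁.trans (hp.floorVal_mem_Icc hβ n).1

lemma floorVal_natCast_mul_zero (β x : ℝ) : floorVal β (fun j => (j : ℝ) * x) 0 = lowerVal β x := by
  simp [floorVal, lowerVal]

lemma natCast_add_mul_div {k n : ℕ} (hn : 0 < n) (j : ℕ) :
    ((n + j : ℕ) : ℝ) * (k / n) = j * (k / n) + (k : ℤ) := by
  have : (n : ℝ) ≠ 0 := Nat.cast_ne_zero.2 hn.ne'
  push_cast
  field_simp
  ring

lemma floorVal_natCast_mul_div_self (β : ℝ) {k n : ℕ} (hn : 0 < n) :
    floorVal β (fun j => (j : ℝ) * (k / n)) n = lowerVal β (k / n) := by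
  have hn0 : (n : ℝ) * (k / n) = (k : ℤ) := by simpa using natCast_add_mul_div (k := k) hn 0
  rw [floorVal, lowerVal]
  congr 1 with j
  rw [natCast_add_mul_div hn, hn0, Int.floor_add_intCast, Int.floor_intCast]
  push_cast
  ring

end FloorVal

/-! ### The survivor set at `1 - 1/β` -/

lemma dimH_eq_zero_of_linear_covers {X : Type*} [EMetricSpace X] {S : Set X} {r : ℝ} (hr₀ : 0 ≤ r)
    (hr₁ : r < 1) (U : (n : ℕ) → Fin (n + 1) → Set X) (hU : ∀ n, S ⊆ ⋃ i, U n i)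
    (hdiam : ∀ n i, Metric.ediam (U n i) ≤ ENNReal.ofReal (r ^ n)) : dimH S = 0 := by
  borelize X
  refine nonpos_iff_eq_zero.1 (le_of_forall_gt fun d hd => ?_)
  obtain ⟨e, he0, hed⟩ := ENNReal.lt_iff_exists_nnreal_btwn.1 hd
  have he : (0 : ℝ) < e := by exact_mod_cast he0
  refine (dimH_le_of_hausdorffMeasure_ne_top (d := e) ?_).trans_lt hed
  have hr : Tendsto (fun n : ℕ => ENNReal.ofReal (r ^ n)) atTop (𝓝 0) := by
    simpa using ENNReal.tendsto_ofReal (tendsto_pow_atTop_nhds_zero_of_lt_one hr₀ hr₁)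
  have hre₀ : 0 ≤ r ^ (e : ℝ) := Real.rpow_nonneg hr₀ _
  have hre₁ : r ^ (e : ℝ) < 1 := Real.rpow_lt_one hr₀ hr₁ he
  have hbound : Tendsto (fun n : ℕ => ENNReal.ofReal ((n + 1) * (r ^ (e : ℝ)) ^ n))
      atTop (𝓝 0) := by
    have h := (tendsto_self_mul_const_pow_of_lt_one hre₀ hre₁).add
      (tendsto_pow_atTop_nhds_zero_of_lt_one hre₀ hre₁)
    simpa [add_mul] using ENNReal.tendsto_ofReal h
  have hsum (n : ℕ) : ∑ i, Metric.ediam (U n i) ^ (e : ℝ)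
      ≤ ENNReal.ofReal ((n + 1) * (r ^ (e : ℝ)) ^ n) :=
    calc ∑ i, Metric.ediam (U n i) ^ (e : ℝ)
        ≤ ∑ _i : Fin (n + 1), ENNReal.ofReal ((r ^ (e : ℝ)) ^ n) := by
          gcongr with i
          rw [Real.rpow_pow_comm hr₀, ← ENNReal.ofReal_rpow_of_nonneg (pow_nonneg hr₀ n) he.le]
          gcongr
          exact hdiam n i
      _ = ENNReal.ofReal ((n + 1) * (r ^ (e : ℝ)) ^ n) := by
          rw [Finset.sum_const, Finset.card_fin, ENNReal.ofReal_mul (by positivity),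
            nsmul_eq_mul, ← Nat.cast_succ, ENNReal.ofReal_natCast]
  have hlim := tendsto_of_tendsto_of_tendsto_of_le_of_le tendsto_const_nhds hbound
    (fun _ => zero_le) hsum
  have hmeas := Measure.hausdorffMeasure_le_liminf_sum (e : ℝ) S _ hr U
    (.of_forall hdiam) (.of_forall hU)
  rw [hlim.liminf_eq] at hmeas
  exact ne_top_of_le_ne_top ENNReal.zero_ne_top hmeas

section Survivor

variable {β x y : ℝ}

lemma mapsTo_Tbeta_survivor (β t : ℝ) : MapsTo (Tbeta β) (survivor β t) (survivor β t) :=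
  fun _ hx => ⟨⟨Int.fract_nonneg _, Int.fract_lt_one _⟩, fun n => hx.2 (n + 1)⟩

lemma le_of_mem_survivor {t : ℝ} (hx : x ∈ survivor β t) : t ≤ x := hx.2 0

lemma mul_mem_Ico_of_mem_survivor (hβ : 1 < β) (hx : x ∈ survivor β (1 - 1 / β)) :
    β * x ∈ Ico (β - 1) β := by
  have hβ0 : 0 < β := one_pos.trans hβ
  refine ⟨?_, mul_lt_of_lt_one_right hβ0 hx.1.2⟩
  have h := mul_le_mul_of_nonneg_left (le_of_mem_survivor hx) hβ0.le
  rwa [mul_sub, mul_one_div_cancel hβ0.ne', mul_one] at h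

lemma Tbeta_eq_of_mem_survivor (hβ : 1 < β) (hx : x ∈ survivor β (1 - 1 / β)) :
    Tbeta β x = if ⌈β - 1⌉ ≤ β * x then β * x - ⌈β - 1⌉ else β * x - (⌈β - 1⌉ - 1) := by
  obtain ⟨h₁, h₂⟩ := mul_mem_Ico_of_mem_survivor hβ hx
  have := Int.le_ceil (β - 1)
  have := Int.ceil_lt_add_one (β - 1)
  rw [Tbeta, Int.fract_eq_iff]
  split_ifs
  · exact ⟨by linarith, by linarith, ⌈β - 1⌉, by ring⟩
  · exact ⟨by linarith, by linarith, ⌈β - 1⌉ - 1, by push_cast; ring⟩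

/-- Multiplication by `β` maps the survivor set at `1 - 1/β` into an interval of length one, so
a cut of the image under `Tbeta β` comes from a single cut, apart from the one at `⌈β - 1⌉`. -/
lemma exists_cut_preimage (hβ : 1 < β) (d : ℝ) :
    ∃ c : ℝ, ∀ x ∈ survivor β (1 - 1 / β), ∀ y ∈ survivor β (1 - 1 / β),
      (⌈β - 1⌉ ≤ β * x ↔ ⌈β - 1⌉ ≤ β * y) → (c ≤ β * x ↔ c ≤ β * y) →
        (d ≤ Tbeta β x ↔ d ≤ Tbeta β y) := by
  refine ⟨if d + ⌈β - 1⌉ < β then d + ⌈β - 1⌉ else d + ⌈β - 1⌉ - 1, fun x hx y hy hm hc => ?_⟩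
  obtain ⟨hx₁, hx₂⟩ := mul_mem_Ico_of_mem_survivor hβ hx
  obtain ⟨hy₁, hy₂⟩ := mul_mem_Ico_of_mem_survivor hβ hy
  rw [Tbeta_eq_of_mem_survivor hβ hx, Tbeta_eq_of_mem_survivor hβ hy]
  simp only [← hm]
  split_ifs at hc ⊢
  · rwa [le_sub_iff_add_le, le_sub_iff_add_le]
  · exact iff_of_false (by linarith) (by linarith)
  · exact iff_of_true (by linarith) (by linarith)
  · rwa [le_sub_iff_add_le, le_sub_iff_add_le, ← add_sub_assoc]

lemma exists_cuts (hβ : 1 < β) (n : ℕ) :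
    ∃ D : Finset ℝ, D.card ≤ n ∧ ∀ x ∈ survivor β (1 - 1 / β), ∀ y ∈ survivor β (1 - 1 / β),
      (∀ d ∈ D, d ≤ x ↔ d ≤ y) → |x - y| ≤ β⁻¹ ^ n := by
  classical
  have hβ0 : 0 < β := one_pos.trans hβ
  induction n with
  | zero =>
    refine ⟨∅, le_rfl, fun x hx y hy _ => ?_⟩
    rw [pow_zero, abs_le]
    constructor <;> linarith [hx.1.1, hx.1.2, hy.1.1, hy.1.2]
  | succ n ih =>
    obtain ⟨D, hDn, hD⟩ := ih
    choose c hc using exists_cut_preimage hβ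
    refine ⟨(insert (⌈β - 1⌉ : ℝ) (D.image c)).image (· / β), ?_, fun x hx y hy hcut => ?_⟩
    · exact Finset.card_image_le.trans ((Finset.card_insert_le _ _).trans
        (Nat.succ_le_succ (Finset.card_image_le.trans hDn)))
    have hcut' : ∀ d ∈ insert (⌈β - 1⌉ : ℝ) (D.image c), d ≤ β * x ↔ d ≤ β * y := fun d hd => by
      simpa only [div_le_iff₀' hβ0] using hcut _ (Finset.mem_image_of_mem _ hd)
    have hm := hcut' _ (Finset.mem_insert_self _ _)
    have hT : |Tbeta β x - Tbeta β y| ≤ β⁻¹ ^ n :=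
      hD _ (mapsTo_Tbeta_survivor β _ hx) _ (mapsTo_Tbeta_survivor β _ hy) fun d hd =>
        hc d x hx y hy hm (hcut' _ (Finset.mem_insert_of_mem (Finset.mem_image_of_mem _ hd)))
    have hdist : Tbeta β x - Tbeta β y = β * (x - y) := by
      rw [Tbeta_eq_of_mem_survivor hβ hx, Tbeta_eq_of_mem_survivor hβ hy]
      simp only [← hm]
      split_ifs <;> ring
    rw [hdist, abs_mul, abs_of_pos hβ0] at hT
    rwa [pow_succ', inv_mul_eq_div, le_div_iff₀' hβ0]

lemma dimH_survivor_one_sub_inv (hβ : 1 < β) : dimH (survivor β (1 - 1 / β)) = 0 := by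
  choose D hDn hD using exists_cuts hβ
  set U : (n : ℕ) → Fin (n + 1) → Set ℝ := fun n i =>
    {x | x ∈ survivor β (1 - 1 / β) ∧ ((D n).filter (· ≤ x)).card = i}
  have hcover (n : ℕ) : survivor β (1 - 1 / β) ⊆ ⋃ i, U n i := fun x hx =>
    mem_iUnion.2 ⟨⟨((D n).filter (· ≤ x)).card,
      Nat.lt_succ_of_le ((Finset.card_filter_le _ _).trans (hDn n))⟩, hx, rfl⟩
  have hle (n : ℕ) {x y : ℝ} (hxy : x ≤ y)
      (hcard : ((D n).filter (· ≤ x)).card = ((D n).filter (· ≤ y)).card) :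
      ∀ d ∈ D n, d ≤ x ↔ d ≤ y := fun d hd => by
    have hsub : (D n).filter (· ≤ x) ⊆ (D n).filter (· ≤ y) :=
      Finset.monotone_filter_right _ fun _ _ h => h.trans hxy
    have hmem := Finset.ext_iff.1 (Finset.eq_of_subset_of_card_le hsub hcard.ge) d
    simpa only [Finset.mem_filter, hd, true_and] using hmem
  refine dimH_eq_zero_of_linear_covers (inv_pos.2 (one_pos.trans hβ)).le
    (inv_lt_one_of_one_lt₀ hβ) U hcover fun n i => Metric.ediam_le ?_
  rintro x ⟨hx, hxi⟩ y ⟨hy, hyi⟩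
  rw [edist_dist]
  refine ENNReal.ofReal_le_ofReal (hD n x hx y hy ?_)
  rcases le_total x y with h | h
  · exact hle n h (hxi.trans hyi.symm)
  · exact fun d hd => (hle n h (hyi.trans hxi.symm) d hd).symm

lemma tau_le_of_dimH_eq_zero {t : ℝ} (ht : 0 < t) (h : dimH (survivor β t) = 0) : tau β ≤ t :=
  csInf_le ⟨0, fun _ hs => hs.1.le⟩ ⟨ht, h⟩

lemma tau_le_one_sub_one_div (hβ : 1 < β) : tau β ≤ 1 - 1 / β :=
  tau_le_of_dimH_eq_zero (one_sub_one_div_pos hβ) (dimH_survivor_one_sub_inv hβ)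

end Survivor

/-! ### A jump of the mechanical value over `1` -/

section Jump

variable {β : ℝ}

lemma iterate_Tbeta_sub (hβ : 1 < β) {x e : ℝ} (hx : x ∈ Ico (0 : ℝ) 1) (he : 0 ≤ e) {n : ℕ}
    (hn : β ^ n * e ≤ (Tbeta β)^[n] x) :
    (Tbeta β)^[n] (x - e) = (Tbeta β)^[n] x - β ^ n * e := by
  have hβ0 : 0 < β := one_pos.trans hβ
  have hmem (i : ℕ) : (Tbeta β)^[i] x ∈ Ico (0 : ℝ) 1 := by
    cases i with
    | zero => exact hx
    | succ i =>
      rw [Function.iterate_succ_apply']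
      exact ⟨Int.fract_nonneg _, Int.fract_lt_one _⟩
  induction n with
  | zero => simp
  | succ n ih =>
    have hle : (Tbeta β)^[n + 1] x ≤ β * (Tbeta β)^[n] x := by
      rw [Function.iterate_succ_apply']
      exact sub_le_self _ (Int.cast_nonneg (Int.floor_nonneg.2 (mul_nonneg hβ0.le (hmem n).1)))
    have hprev : β ^ n * e ≤ (Tbeta β)^[n] x := by
      refine le_of_mul_le_mul_left ?_ hβ0
      rw [← mul_assoc, ← pow_succ']
      exact hn.trans hle
    have hgap : 0 ≤ β ^ (n + 1) * e := mul_nonneg (pow_pos hβ0 _).le he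
    rw [Function.iterate_succ_apply', ih hprev, Tbeta, Int.fract_eq_iff]
    refine ⟨sub_nonneg.2 hn, by linarith [(hmem (n + 1)).2], ⌊β * (Tbeta β)^[n] x⌋, ?_⟩
    rw [Function.iterate_succ_apply', Tbeta, Int.fract]
    ring

/-- If `m` has period `n`, an orbit staying above `m (1 - 1/β^n)` cannot enter below `m`, because
its distance to `m` would be multiplied by `β^n` in each period. -/
lemma survivor_subset_survivor (hβ : 1 < β) {m s t : ℝ} {n : ℕ} (hn : 0 < n)
    (hm : m ∈ Ico (0 : ℝ) 1) (hper : (Tbeta β)^[n] m = m) (ht : m * (1 - 1 / β ^ n) < t)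
    (hs : s ≤ m) : survivor β t ⊆ survivor β s := by
  refine fun y hy => ⟨hy.1, fun N => ?_⟩
  by_contra! hlt
  set z := (Tbeta β)^[N] y
  have hz (i : ℕ) : ((Tbeta β)^[n])^[i] z ∈ survivor β t :=
    ((mapsTo_Tbeta_survivor β t).iterate n).iterate i ((mapsTo_Tbeta_survivor β t).iterate N hy)
  have hβn : 1 < β ^ n := one_lt_pow₀ hβ hn.ne'
  have hgap : 0 < m - z := sub_pos.2 (hlt.trans_le hs)
  have hexpand (i : ℕ) : ((Tbeta β)^[n])^[i] z = m - (β ^ n) ^ i * (m - z) := by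
    induction i with
    | zero => simp
    | succ i ih =>
      have hlow := ht.trans_le (le_of_mem_survivor (hz i))
      rw [ih, mul_sub, mul_one, mul_one_div, sub_lt_sub_iff_left, lt_div_iff₀' (by positivity)]
        at hlow
      rw [Function.iterate_succ_apply', ih,
        iterate_Tbeta_sub hβ hm (by positivity) (hper.symm ▸ hlow.le), hper, pow_succ', mul_assoc]
  obtain ⟨i, hi⟩ := pow_unbounded_of_one_lt (m / (m - z)) hβn
  rw [div_lt_iff₀ hgap] at hi
  linarith [(hz i).1.1, hexpand i]

lemma abelSum_ite_dvd (hβ : 1 < β) {n : ℕ} (hn : 0 < n) :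
    (1 - 1 / β ^ n) * abelSum β (fun j => if n ∣ j then 1 else 0) = 1 - 1 / β := by
  have h := abelSum_eq_sum_range_add (abelSummable_ite hβ (n ∣ ·) 1 0) n
  have hsum : ∑ j ∈ Finset.range n, (if n ∣ j then (1 : ℝ) else 0) / β ^ j = 1 := by
    rw [Finset.sum_eq_single_of_mem 0 (Finset.mem_range.2 hn) fun j hj hj0 => ?_]
    · simp
    · rw [if_neg (Nat.not_dvd_of_pos_of_lt (Nat.pos_of_ne_zero hj0) (Finset.mem_range.1 hj)),
        zero_div]
  simp only [Nat.dvd_add_right (dvd_refl n), hsum] at h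
  linear_combination h

lemma ceil_natCast_mul_div_of_coprime {k n : ℕ} (hn : 0 < n) (hkn : k.Coprime n) (j : ℕ) :
    (⌈(j : ℝ) * (k / n)⌉ : ℝ) = ⌊(j : ℝ) * (k / n)⌋ + 1 - if n ∣ j then 1 else 0 := by
  have hn0 : (n : ℝ) ≠ 0 := Nat.cast_ne_zero.2 hn.ne'
  split_ifs with h
  · obtain ⟨c, rfl⟩ := h
    have hint : ((n * c : ℕ) : ℝ) * (k / n) = (c * k : ℕ) := by
      push_cast
      field_simp
    rw [hint, Int.ceil_natCast, Int.floor_natCast, add_sub_cancel_right]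
  · have hceil : ⌈(j : ℝ) * (k / n)⌉ = ⌊(j : ℝ) * (k / n)⌋ + 1 := by
      refine (Int.ceil_eq_floor_add_one_iff_notMem _).2 ?_
      rintro ⟨z, hz⟩
      field_simp at hz
      refine h (hkn.symm.dvd_of_dvd_mul_right (Int.natCast_dvd_natCast.1 ⟨z, ?_⟩))
      rw [mul_comm (n : ℤ)]
      exact_mod_cast hz.symm
    rw [sub_zero]
    exact_mod_cast hceil

lemma one_sub_mul_lowerVal_add_one_sub_upperVal (hβ : 1 < β) {k n : ℕ} (hn : 0 < n)
    (hkn : k.Coprime n) :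
    (1 - 1 / β ^ n) * (lowerVal β (k / n) + 1 - upperVal β (k / n)) = 1 - 1 / β := by
  have h : upperVal β (k / n)
      = lowerVal β (k / n) + 1 - abelSum β fun j => if n ∣ j then 1 else 0 := by
    simp only [upperVal, ceil_natCast_mul_div_of_coprime hn hkn]
    rw [abelSum_sub ((abelSummable_floor hβ _).add (abelSummable_const hβ 1))
        (abelSummable_ite hβ (n ∣ ·) 1 0),
      abelSum_add (abelSummable_floor hβ _) (abelSummable_const hβ 1), abelSum_const hβ, lowerVal]
  rw [← abelSum_ite_dvd hβ hn, h, sub_sub_cancel]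

lemma tau_lt_of_jump (hβ : 1 < β) {k n : ℕ} (hn : 0 < n) (hkn : k.Coprime n)
    (hupper : upperVal β (k / n) < 1) (hlower : 1 ≤ lowerVal β (k / n) + 1 / β) :
    tau β < 1 - 1 / β := by
  have hpath := isSlopePath_natCast_mul ((k : ℝ) / n)
  have hzero := one_sub_one_div_pos hβ
  have hle : 1 - 1 / β ≤ lowerVal β (k / n) := by linarith
  have hmem := hpath.floorVal_mem_survivor hβ hzero.le hle hupper
  have hper := hpath.iterate_Tbeta_floorVal hβ (hzero.le.trans hle) hupper n
  rw [floorVal_natCast_mul_div_self β hn, floorVal_natCast_mul_zero] at hper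
  rw [floorVal_natCast_mul_zero] at hmem
  have hlt : lowerVal β (k / n) * (1 - 1 / β ^ n) < 1 - 1 / β := by
    have hβn : 0 < 1 - 1 / β ^ n := one_sub_one_div_pos (one_lt_pow₀ hβ hn.ne')
    linarith [one_sub_mul_lowerVal_add_one_sub_upperVal hβ hn hkn,
      mul_pos hβn (sub_pos.2 hupper)]
  obtain ⟨t, ht, ht'⟩ := exists_between (max_lt hzero hlt)
  obtain ⟨ht₀, ht₁⟩ := max_lt_iff.1 ht
  have hsub := survivor_subset_survivor hβ hn hmem.1 hper ht₁ hle
  refine (tau_le_of_dimH_eq_zero ht₀ (nonpos_iff_eq_zero.1 ?_)).trans_lt ht'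
  exact (dimH_mono hsub).trans (dimH_survivor_one_sub_inv hβ).le

end Jump

/-! ### Positive dimension below the critical level -/

section Coding

variable {X : Type*} [MetricSpace X] {b : ℕ} {B c : ℝ} {g : (ℕ → Fin b) → X}

lemma injective_of_separated (hB : 0 < B) (hc : 0 < c)
    (hg : ∀ ⦃ω ω' i⦄, (∀ j < i, ω j = ω' j) → ω i ≠ ω' i → c / B ^ (i + 1) ≤ dist (g ω) (g ω')) :
    Function.Injective g := by
  intro ω ω' heq
  by_contra hne
  have hex : ∃ i, ω i ≠ ω' i := Function.ne_iff.1 hne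
  have hdist := hg (fun j hj => not_not.1 (Nat.find_min hex hj)) (Nat.find_spec hex)
  rw [heq, dist_self] at hdist
  exact hdist.not_gt (by positivity)

lemma abs_ofDigits_sub_ofDigits_le_of_separated (hb : 0 < b) (hB : 1 < B) (hc : 0 < c)
    (hg : ∀ ⦃ω ω' i⦄, (∀ j < i, ω j = ω' j) → ω i ≠ ω' i → c / B ^ (i + 1) ≤ dist (g ω) (g ω'))
    (ω ω' : ℕ → Fin b) :
    |Real.ofDigits ω - Real.ofDigits ω'|
      ≤ b / c ^ Real.logb B b * dist (g ω) (g ω') ^ Real.logb B b := by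
  have hB0 : 0 < B := one_pos.trans hB
  have hb0 : (0 : ℝ) < b := Nat.cast_pos.2 hb
  rcases eq_or_ne ω ω' with rfl | hne
  · rw [sub_self, abs_zero]
    positivity
  have hex : ∃ i, ω i ≠ ω' i := Function.ne_iff.1 hne
  have hmin : ∀ j < Nat.find hex, ω j = ω' j := fun j hj => not_not.1 (Nat.find_min hex hj)
  have hr : 0 ≤ Real.logb B b := Real.logb_nonneg hB (Nat.one_le_cast.2 hb)
  calc |Real.ofDigits ω - Real.ofDigits ω'| ≤ ((b : ℝ) ^ Nat.find hex)⁻¹ :=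
        Real.abs_ofDigits_sub_ofDigits_le hmin
    _ = b / c ^ Real.logb B b * (c / B ^ (Nat.find hex + 1)) ^ Real.logb B b := by
        rw [Real.div_rpow hc.le (by positivity), ← Real.rpow_pow_comm hB0.le,
          Real.rpow_logb hB0 hB.ne' hb0, pow_succ]
        field_simp
    _ ≤ b / c ^ Real.logb B b * dist (g ω) (g ω') ^ Real.logb B b := by
        gcongr
        exact hg hmin (Nat.find_spec hex)

lemma logb_le_dimH_range (hb : 1 < b) (hB : 1 < B) (hc : 0 < c)
    (hg : ∀ ⦃ω ω' i⦄, (∀ j < i, ω j = ω' j) → ω i ≠ ω' i → c / B ^ (i + 1) ≤ dist (g ω) (g ω')) :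
    ENNReal.ofReal (Real.logb B b) ≤ dimH (range g) := by
  have hr : 0 < Real.logb B b := Real.logb_pos hB (Nat.one_lt_cast.2 hb)
  have hinj := injective_of_separated (one_pos.trans hB) hc hg
  have : NeZero b := ⟨by lia⟩
  have hholder : HolderOnWith (b / c ^ Real.logb B b).toNNReal (Real.logb B b).toNNReal
      (fun x => Real.ofDigits (Function.invFun g x)) (range g) := by
    rintro _ ⟨ω, rfl⟩ _ ⟨ω', rfl⟩
    simp only [Function.leftInverse_invFun hinj _]
    rw [edist_dist, edist_dist, Real.coe_toNNReal _ hr.le,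
      ENNReal.ofReal_rpow_of_nonneg dist_nonneg hr.le, ← ENNReal.ofReal_coe_nnreal,
      Real.coe_toNNReal _ (by positivity), ← ENNReal.ofReal_mul (by positivity)]
    exact ENNReal.ofReal_le_ofReal
      (abs_ofDigits_sub_ofDigits_le_of_separated (by lia) hB hc hg ω ω')
  have hsurj : Icc (0 : ℝ) 1 ⊆ (fun x => Real.ofDigits (Function.invFun g x)) '' range g := by
    intro y hy
    obtain ⟨ω, -, rfl⟩ := Real.ofDigits_SurjOn hb hy
    exact ⟨g ω, ⟨ω, rfl⟩, by simp only [Function.leftInverse_invFun hinj _]⟩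
  have hdim := (dimH_mono hsurj).trans (hholder.dimH_image_le (Real.toNNReal_pos.2 hr))
  rw [Real.dimH_of_nonempty_interior (by simp), Module.finrank_self, Nat.cast_one,
    ENNReal.le_div_iff_mul_le (by simp [hr]) (by simp), one_mul] at hdim
  exact hdim

end Coding

section SlopePath

variable {β x₁ x₂ t : ℝ} {ι : Type*} {H i : ℕ} {ω ω' : ℕ → ι}

/-- The path starting at `0` whose slope in the `i`-th block of length `H` is `x (ω i)`. -/
def slopePath (x : ι → ℝ) (H : ℕ) (ω : ℕ → ι) (a : ℕ) : ℝ :=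
  ∑ b ∈ Finset.range a, x (ω (b / H))

lemma isSlopePath_slopePath {x : ι → ℝ} (hx : ∀ d, x d ∈ Icc x₁ x₂) (H : ℕ) (ω : ℕ → ι) :
    IsSlopePath x₁ x₂ (slopePath x H ω) := fun a => by
  rw [slopePath, slopePath, Finset.sum_range_succ, add_sub_cancel_left]
  exact hx _

lemma slopePath_mul_add_self (x : ι → ℝ) (hH : 0 < H) (ω : ℕ → ι) (i : ℕ) :
    slopePath x H ω (H * i + H) = slopePath x H ω (H * i) + H * x (ω i) := by
  have hblock : ∀ b ∈ Finset.range H, x (ω ((H * i + b) / H)) = x (ω i) := fun b hb => by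
    rw [Nat.mul_add_div hH, Nat.div_eq_of_lt (Finset.mem_range.1 hb), add_zero]
  rw [slopePath, Finset.sum_range_add, Finset.sum_congr rfl hblock, Finset.sum_const,
    Finset.card_range, nsmul_eq_mul, slopePath]

lemma slopePath_congr (x : ι → ℝ) (h : ∀ j < i, ω j = ω' j) :
    slopePath x H ω (H * i) = slopePath x H ω' (H * i) :=
  Finset.sum_congr rfl fun _ hb => by
    rw [h _ (Nat.div_lt_of_lt_mul (Finset.mem_range.1 hb))]

lemma floor_slopePath_ne {x : ι → ℝ} (hH : 0 < H) (h : ∀ j < i, ω j = ω' j)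
    (hi : 1 ≤ H * |x (ω i) - x (ω' i)|) :
    ⌊slopePath x H ω (H * i + H)⌋ ≠ ⌊slopePath x H ω' (H * i + H)⌋ := fun heq => by
  have habs := Int.abs_sub_lt_one_of_floor_eq_floor heq
  rw [slopePath_mul_add_self x hH, slopePath_mul_add_self x hH, slopePath_congr x h,
    add_sub_add_left_eq_sub, ← mul_sub, abs_mul, Nat.abs_cast] at habs
  exact habs.not_ge hi

lemma IsSlopePath.div_pow_le_abs_floorVal_sub {p q : ℕ → ℝ} (hβ : 1 < β)
    (hp : IsSlopePath x₁ x₂ p) (hq : IsSlopePath x₁ x₂ q) (ht : t ≤ lowerVal β x₁)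
    (hM : upperVal β x₂ < 1) (h₀ : ⌊p 0⌋ = ⌊q 0⌋) {N : ℕ} (hN : ⌊p N⌋ ≠ ⌊q N⌋) :
    t / β ^ N ≤ |floorVal β p 0 - floorVal β q 0| := by
  have hβ0 : 0 < β := one_pos.trans hβ
  have hex : ∃ b, ⌊p b⌋ ≠ ⌊q b⌋ := ⟨N, hN⟩
  have hb := Nat.find_spec hex
  have hmin : ∀ a < Nat.find hex, ⌊p a⌋ = ⌊q a⌋ := fun a ha => not_not.1 (Nat.find_min hex ha)
  have hbN : Nat.find hex ≤ N := Nat.find_min' hex hN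
  set b := Nat.find hex
  have hsum : ∑ j ∈ Finset.range b, ((⌊p (0 + j)⌋ : ℝ) - ⌊p 0⌋) / β ^ j
      = ∑ j ∈ Finset.range b, ((⌊q (0 + j)⌋ : ℝ) - ⌊q 0⌋) / β ^ j :=
    Finset.sum_congr rfl fun j hj => by
      rw [zero_add, hmin j (Finset.mem_range.1 hj), h₀]
  have hdiff : β ^ b * (floorVal β p 0 - floorVal β q 0)
      = ((⌊p b⌋ : ℝ) - ⌊q b⌋) + (floorVal β p b - floorVal β q b) := by
    rw [floorVal_eq_sum_range_add hβ hp 0 b, floorVal_eq_sum_range_add hβ hq 0 b, hsum, h₀,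
      zero_add]
    field_simp
    ring
  have hint : (1 : ℝ) ≤ |(⌊p b⌋ : ℝ) - ⌊q b⌋| := by
    exact_mod_cast Int.one_le_abs (sub_ne_zero.2 hb)
  have htail : |floorVal β p b - floorVal β q b| ≤ 1 - t :=
    abs_sub_le_of_le_of_le (ht.trans (hp.floorVal_mem_Icc hβ b).1)
      ((hp.floorVal_mem_Icc hβ b).2.trans hM.le) (ht.trans (hq.floorVal_mem_Icc hβ b).1)
      ((hq.floorVal_mem_Icc hβ b).2.trans hM.le)
  rw [div_le_iff₀' (by positivity)]
  calc t ≤ |(⌊p b⌋ : ℝ) - ⌊q b⌋| - |floorVal β p b - floorVal β q b| := by linarith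
    _ ≤ β ^ b * |floorVal β p 0 - floorVal β q 0| := by
      rw [← abs_of_pos (pow_pos hβ0 b), ← abs_mul, hdiff]
      exact abs_sub_abs_le_abs_add _ _
    _ ≤ β ^ N * |floorVal β p 0 - floorVal β q 0| := by
      gcongr
      exact hβ.le

lemma dimH_survivor_ne_zero {a : ℝ} (hβ : 1 < β) (ha : upperVal β a = 1) (ht₀ : 0 < t)
    (ht : t < 1 - 1 / β) : dimH (survivor β t) ≠ 0 := by
  obtain ⟨x₁, x₂, hx, hlow, hM⟩ := exists_lt_lowerVal_upperVal_lt_one hβ ha ht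
  obtain ⟨H, hH⟩ := exists_nat_ge (1 / (x₂ - x₁))
  rw [div_le_iff₀ (sub_pos.2 hx)] at hH
  have hH0 : 0 < H := by
    rcases Nat.eq_zero_or_pos H with rfl | h
    · norm_num at hH
    · exact h
  have hβH : 1 < β ^ H := one_lt_pow₀ hβ hH0.ne'
  have hpath : ∀ ω, IsSlopePath x₁ x₂ (slopePath ![x₁, x₂] H ω) :=
    isSlopePath_slopePath (x := ![x₁, x₂])
      (Fin.forall_fin_two.2 ⟨left_mem_Icc.2 hx.le, right_mem_Icc.2 hx.le⟩) H
  have hslope : ∀ d d' : Fin 2, d ≠ d' → 1 ≤ H * |![x₁, x₂] d - ![x₁, x₂] d'| := by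
    simp [Fin.forall_fin_two, abs_sub_comm x₁, abs_of_pos (sub_pos.2 hx), hH]
  have hsep : ENNReal.ofReal (Real.logb (β ^ H) (2 : ℕ))
      ≤ dimH (range fun ω => floorVal β (slopePath ![x₁, x₂] H ω) 0) :=
    logb_le_dimH_range one_lt_two hβH ht₀ fun ω ω' i hmin hi => by
      rw [Real.dist_eq, ← pow_mul, Nat.mul_succ]
      exact (hpath ω).div_pow_le_abs_floorVal_sub hβ (hpath ω') hlow hM rfl
        (floor_slopePath_ne hH0 hmin (hslope _ _ hi))
  have hsub : (range fun ω => floorVal β (slopePath ![x₁, x₂] H ω) 0) ⊆ survivor β t :=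
    range_subset_iff.2 fun ω => (hpath ω).floorVal_mem_survivor hβ ht₀.le hlow hM
  have hpos : 0 < ENNReal.ofReal (Real.logb (β ^ H) (2 : ℕ)) :=
    ENNReal.ofReal_pos.2 (Real.logb_pos hβH (by norm_num))
  exact (hpos.trans_le (hsep.trans (dimH_mono hsub))).ne'

lemma tau_eq_one_sub_one_div_iff (hβ : 1 < β) : tau β = 1 - 1 / β ↔ ∃ a, upperVal β a = 1 := by
  have hpos := one_sub_one_div_pos hβ
  refine ⟨fun h => ?_, fun ⟨a, ha⟩ => (tau_le_one_sub_one_div hβ).antisymm ?_⟩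
  · refine (exists_upperVal_eq_one_or_jump hβ).resolve_right ?_
    rintro ⟨k, n, -, hn, hkn, hupper, hlower⟩
    exact (tau_lt_of_jump hβ hn hkn hupper hlower).ne h
  · refine le_csInf ⟨_, hpos, dimH_survivor_one_sub_inv hβ⟩ fun t ⟨ht₀, ht⟩ => ?_
    by_contra! hlt
    exact dimH_survivor_ne_zero hβ ha ht₀ hlt ht

end SlopePath

/-! ### Farey words are mechanical words -/

section FareyWords

variable {p q : ℕ × ℕ} {k n i j : ℕ}

/-- The digits `⌊(j + 1) k / n⌋ - ⌊j k / n⌋` of the lower mechanical word of slope `k / n`. -/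
def lowerDigit (k n j : ℕ) : ℕ := (j + 1) * k / n - j * k / n

/-- The lower mechanical word of slope `k / n`. -/
def lowerWord (k n : ℕ) : List ℕ := (List.range n).map (lowerDigit k n)

/-- The fractions `p.1 / p.2 < q.1 / q.2 ≤ 1` are Farey neighbours. -/
structure FareyAdj (p q : ℕ × ℕ) : Prop where
  le_one : q.1 ≤ q.2
  det : q.1 * p.2 = p.1 * q.2 + 1

lemma FareyAdj.pos_left (h : FareyAdj p q) : 0 < p.2 :=
  Nat.pos_of_ne_zero fun h₀ => by simpa [h₀] using h.det

lemma FareyAdj.pos_right (h : FareyAdj p q) : 0 < q.2 :=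
  Nat.pos_of_ne_zero fun h₀ => by
    have hq : q.1 = 0 := Nat.le_zero.1 (h₀ ▸ h.le_one)
    simpa [hq] using h.det

lemma FareyAdj.fst_lt_snd_left (h : FareyAdj p q) : p.1 < p.2 := by
  by_contra! hle
  nlinarith [h.det, h.le_one, Nat.mul_le_mul h.le_one hle]

lemma FareyAdj.mediant_left (h : FareyAdj p q) : FareyAdj p (p + q) where
  le_one := add_le_add h.fst_lt_snd_left.le h.le_one
  det := by
    rw [Prod.fst_add, Prod.snd_add, add_mul, h.det]
    ring

lemma FareyAdj.mediant_right (h : FareyAdj p q) : FareyAdj (p + q) q where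
  le_one := h.le_one
  det := by
    rw [Prod.fst_add, Prod.snd_add, mul_add, h.det]
    ring

lemma FareyAdj.coprime_right (h : FareyAdj p q) : q.1.Coprime q.2 :=
  Nat.coprime_of_dvd' fun d _ hd₁ hd₂ => by
    rw [← Nat.dvd_add_right (hd₂.mul_left p.1), ← h.det]
    exact hd₁.mul_right p.2

lemma FareyAdj.eq_or_exists_mediant (h : FareyAdj p q) :
    (p = (0, 1) ∧ q = (1, 1)) ∨ (∃ r, FareyAdj p r ∧ q = p + r) ∨
      ∃ r, FareyAdj r q ∧ p = r + q := by
  obtain ⟨k₁, n₁⟩ := p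
  obtain ⟨k₂, n₂⟩ := q
  have hp := h.fst_lt_snd_left
  obtain ⟨hle, hdet⟩ := h
  dsimp only at hp hle hdet
  rcases lt_trichotomy n₁ n₂ with hlt | rfl | hlt
  · obtain ⟨n, rfl⟩ : ∃ n, n₂ = n₁ + n := Nat.exists_eq_add_of_le hlt.le
    obtain ⟨k, rfl⟩ : ∃ k, k₂ = k₁ + k := Nat.exists_eq_add_of_le (by nlinarith)
    exact .inr (.inl ⟨(k, n), ⟨by nlinarith, by nlinarith⟩, rfl⟩)
  · refine .inl ?_
    obtain rfl : n₁ = 1 := Nat.dvd_one.1 ((Nat.dvd_add_right (Nat.dvd_mul_left n₁ k₁)).1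
      (hdet ▸ Nat.dvd_mul_left n₁ k₂))
    simp only [Prod.mk.injEq]
    lia
  · obtain ⟨n, rfl⟩ : ∃ n, n₁ = n + n₂ := Nat.exists_eq_add_of_le' hlt.le
    obtain ⟨k, rfl⟩ : ∃ k, k₁ = k + k₂ := Nat.exists_eq_add_of_le' (by nlinarith)
    exact .inr (.inr ⟨(k, n), ⟨hle, by nlinarith⟩, rfl⟩)

lemma FareyAdj.mul_div_mediant (h : FareyAdj p q) (hj : j ≤ p.2) :
    j * (p + q).1 / (p + q).2 = j * p.1 / p.2 := by
  have hp := h.pos_left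
  have hlt : j < (p + q).2 := hj.trans_lt (Nat.lt_add_of_pos_right h.pos_right)
  have hdet := h.mediant_left.det
  generalize p + q = r at hlt hdet ⊢
  refine eq_of_forall_le_iff fun m => ?_
  rw [Nat.le_div_iff_mul_le (j.zero_le.trans_lt hlt), Nat.le_div_iff_mul_le hp]
  constructor <;> intro hm <;> by_contra! hcon
  · nlinarith [Nat.mul_le_mul_right r.2 hcon, Nat.mul_le_mul_right p.2 hm]
  · nlinarith [Nat.mul_le_mul_right r.2 hm, Nat.mul_le_mul_right p.2 hcon]

lemma FareyAdj.add_mul_div_mediant (h : FareyAdj p q) (hi : i ≤ q.2) :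
    (p.2 + i) * (p + q).1 / (p + q).2 = p.1 + i * q.1 / q.2 := by
  have hq := h.pos_right
  have hlt : q.2 < (p + q).2 := Nat.lt_add_of_pos_left h.pos_left
  have hdet := h.mediant_right.det
  have hsum : (p.2 + i) * (p + q).1 = i * (p + q).1 + 1 + p.1 * (p + q).2 := by
    linarith [h.mediant_left.det]
  rw [hsum, Nat.add_mul_div_right _ _ (hq.trans hlt), add_comm]
  generalize p + q = r at hlt hdet ⊢
  congr 1
  refine eq_of_forall_le_iff fun m => ?_
  rw [Nat.le_div_iff_mul_le (hq.trans hlt), Nat.le_div_iff_mul_le hq]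
  constructor <;> intro hm <;> by_contra! hcon
  · nlinarith [Nat.mul_le_mul_right r.2 hcon, Nat.mul_le_mul_right q.2 hm]
  · nlinarith [Nat.mul_le_mul_right r.2 hm, Nat.mul_le_mul_right q.2 hcon]

lemma FareyAdj.lowerWord_append (h : FareyAdj p q) :
    lowerWord p.1 p.2 ++ lowerWord q.1 q.2 = lowerWord (p + q).1 (p + q).2 := by
  have hsnd : List.range (p + q).2 = List.range p.2 ++ (List.range q.2).map (p.2 + ·) :=
    List.range_add
  rw [lowerWord, lowerWord, lowerWord, hsnd, List.map_append, List.map_map]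
  congr 1
  · refine List.map_congr_left fun j hj => ?_
    have hlt := List.mem_range.1 hj
    rw [lowerDigit, lowerDigit, h.mul_div_mediant hlt.le, h.mul_div_mediant hlt]
  · refine List.map_congr_left fun i hi => ?_
    have hlt := List.mem_range.1 hi
    rw [Function.comp_apply, lowerDigit, lowerDigit, h.add_mul_div_mediant hlt.le, add_assoc,
      h.add_mul_div_mediant hlt, Nat.add_sub_add_left]

@[simp] lemma length_lowerWord (k n : ℕ) : (lowerWord k n).length = n := by simp [lowerWord]

lemma theta_lowerWord (k n : ℕ) : theta (lowerWord k n) = lowerWord (k + n) n := by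
  rw [theta, lowerWord, lowerWord, List.map_map]
  refine List.map_congr_left fun j hj => ?_
  have hn : 0 < n := j.zero_le.trans_lt (List.mem_range.1 hj)
  have hle : j * k / n ≤ (j + 1) * k / n := by gcongr; lia
  rw [Function.comp_apply, lowerDigit, lowerDigit, mul_add, mul_add, Nat.add_mul_div_right _ _ hn,
    Nat.add_mul_div_right _ _ hn]
  lia

lemma theta_iterate_lowerWord (k n c : ℕ) :
    theta^[c] (lowerWord k n) = lowerWord (k + n * c) n := by
  induction c with
  | zero => rfl
  | succ c ih => rw [Function.iterate_succ_apply', ih, theta_lowerWord, Nat.mul_succ, add_assoc]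

lemma exists_fareyInsert_cons (w : List ℕ) (l : List (List ℕ)) :
    ∃ l', fareyInsert (w :: l) = w :: l' := by
  cases l with
  | nil => exact ⟨[], rfl⟩
  | cons v l => exact ⟨_, rfl⟩

lemma isChain_fareyInsert {R : List ℕ → List ℕ → Prop} (hleft : ∀ u v, R u v → R u (u ++ v))
    (hright : ∀ u v, R u v → R (u ++ v) v) :
    ∀ l : List (List ℕ), l.IsChain R → (fareyInsert l).IsChain R
  | [], h => h
  | [_], h => h
  | u :: v :: l, h => by
    rw [List.isChain_cons_cons] at h
    have ih := isChain_fareyInsert hleft hright (v :: l) h.2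
    obtain ⟨l', hl'⟩ := exists_fareyInsert_cons v l
    rw [hl'] at ih
    rw [fareyInsert, hl', List.isChain_cons_cons, List.isChain_cons_cons]
    exact ⟨hleft u v h.1, hright u v h.1, ih⟩

lemma forall_mem_fareyInsert {R : List ℕ → List ℕ → Prop} {P : List ℕ → Prop}
    (happend : ∀ u v, R u v → P (u ++ v)) :
    ∀ l : List (List ℕ), l.IsChain R → (∀ w ∈ l, P w) → ∀ w ∈ fareyInsert l, P w
  | [], _, h => h
  | [_], _, h => h
  | u :: v :: l, hl, h => by
    rw [List.isChain_cons_cons] at hl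
    rw [List.forall_mem_cons] at h
    rw [fareyInsert, List.forall_mem_cons, List.forall_mem_cons]
    exact ⟨h.1, happend u v hl.1, forall_mem_fareyInsert happend (v :: l) hl.2 h.2⟩

lemma infix_fareyInsert {u v : List ℕ} : ∀ l : List (List ℕ), [u, v] <:+: l →
    [u, u ++ v] <:+: fareyInsert l ∧ [u ++ v, v] <:+: fareyInsert l
  | [], h => by simp at h
  | [_], h => by simpa using h.length_le
  | a :: b :: l, h => by
    rcases List.infix_cons_iff.1 h with h | h
    · rw [List.cons_prefix_cons, List.cons_prefix_cons] at h
      obtain ⟨rfl, rfl, -⟩ := h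
      obtain ⟨l', hl'⟩ := exists_fareyInsert_cons v l
      rw [fareyInsert, hl']
      exact ⟨⟨[], v :: l', rfl⟩, ⟨[u], l', rfl⟩⟩
    · obtain ⟨hleft, hright⟩ := infix_fareyInsert (b :: l) h
      exact ⟨List.infix_cons (List.infix_cons hleft), List.infix_cons (List.infix_cons hright)⟩

/-- The words `u` and `v` are the lower mechanical words of Farey neighbours. -/
def FareyAdjWord (u v : List ℕ) : Prop :=
  ∃ p q, FareyAdj p q ∧ u = lowerWord p.1 p.2 ∧ v = lowerWord q.1 q.2

lemma isChain_fareyLevel (N : ℕ) : (fareyLevel N).IsChain FareyAdjWord := by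
  induction N with
  | zero => exact List.isChain_pair.2 ⟨(0, 1), (1, 1), ⟨le_rfl, rfl⟩, rfl, rfl⟩
  | succ N ih =>
    refine isChain_fareyInsert ?_ ?_ _ ih
    · rintro _ _ ⟨p, q, h, rfl, rfl⟩
      exact ⟨p, p + q, h.mediant_left, rfl, h.lowerWord_append⟩
    · rintro _ _ ⟨p, q, h, rfl, rfl⟩
      exact ⟨p + q, q, h.mediant_right, h.lowerWord_append, rfl⟩

lemma exists_lowerWord_of_mem_fareyLevel (N : ℕ) :
    ∀ w ∈ fareyLevel N, ∃ k n, 0 < n ∧ k.Coprime n ∧ w = lowerWord k n := by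
  induction N with
  | zero =>
    simp only [fareyLevel, List.forall_mem_cons]
    exact ⟨⟨0, 1, one_pos, rfl, rfl⟩, ⟨1, 1, one_pos, rfl, rfl⟩, by simp⟩
  | succ N ih =>
    refine forall_mem_fareyInsert ?_ _ (isChain_fareyLevel N) ih
    rintro _ _ ⟨p, q, h, rfl, rfl⟩
    exact ⟨_, _, h.mediant_left.pos_right, h.mediant_left.coprime_right, h.lowerWord_append⟩

lemma FareyAdj.exists_infix_fareyLevel (h : FareyAdj p q) :
    ∃ N, [lowerWord p.1 p.2, lowerWord q.1 q.2] <:+: fareyLevel N := by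
  induction hs : p.2 + q.2 using Nat.strong_induction_on generalizing p q with
  | _ s ih =>
  subst hs
  have hp := h.pos_left
  have hq := h.pos_right
  rcases h.eq_or_exists_mediant with ⟨rfl, rfl⟩ | ⟨r, hr, rfl⟩ | ⟨r, hr, rfl⟩
  · exact ⟨0, List.infix_rfl⟩
  · obtain ⟨N, hN⟩ := ih _ (Nat.add_lt_add_left (Nat.lt_add_of_pos_left hp) _) hr rfl
    exact ⟨N + 1, hr.lowerWord_append ▸ (infix_fareyInsert _ hN).1⟩
  · obtain ⟨N, hN⟩ := ih _ (Nat.add_lt_add_right (Nat.lt_add_of_pos_right hq) _) hr rfl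
    exact ⟨N + 1, hr.lowerWord_append ▸ (infix_fareyInsert _ hN).2⟩

lemma exists_fareyAdj (hn : 1 < n) (hkn : k.Coprime n) (hk : k ≤ n) :
    ∃ p, FareyAdj p (k, n) := by
  obtain ⟨a, -, hmod⟩ := Nat.exists_mul_mod_eq_one_of_coprime hkn hn
  refine ⟨(k * a / n, a), hk, ?_⟩
  rw [mul_comm (k * a / n), ← hmod, Nat.div_add_mod]

lemma lowerWord_mem_fareyExt (hk : 0 < k) (hn : 0 < n) (hkn : k.Coprime n) :
    lowerWord k n ∈ FareyExt := by
  rcases (Nat.one_le_iff_ne_zero.2 hn.ne').eq_or_lt with rfl | h₁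
  · refine ⟨lowerWord 1 1, .inr rfl, k - 1, ?_⟩
    rw [theta_iterate_lowerWord, one_mul, Nat.add_sub_cancel' hk]
  · have hmod : (k % n).Coprime n := by rwa [Nat.Coprime, ← Nat.gcd_rec, Nat.gcd_comm]
    obtain ⟨p, hp⟩ := exists_fareyAdj h₁ hmod (Nat.mod_lt _ hn).le
    obtain ⟨N, hN⟩ := hp.exists_infix_fareyLevel
    have hlen (d : ℕ) : lowerWord (k % n) n ≠ [d] := fun h =>
      h₁.ne' (by simpa using congrArg List.length h)
    exact ⟨lowerWord (k % n) n, .inl ⟨⟨N, hN.subset (by simp)⟩, hlen 0, hlen 1⟩, k / n, by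
      rw [theta_iterate_lowerWord, Nat.mod_add_div]⟩

lemma exists_lowerWord_of_mem_fareyHat {w : List ℕ} (hw : w ∈ FareyHat) :
    ∃ k n : ℕ, 0 < k ∧ 0 < n ∧ k.Coprime n ∧ w = lowerWord k n := by
  rcases hw with ⟨⟨N, hN⟩, hne, -⟩ | rfl
  · obtain ⟨k, n, hn, hkn, rfl⟩ := exists_lowerWord_of_mem_fareyLevel N w hN
    refine ⟨k, n, Nat.pos_of_ne_zero ?_, hn, hkn, rfl⟩
    rintro rfl
    obtain rfl : n = 1 := (Nat.coprime_zero_left n).1 hkn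
    exact hne rfl
  · exact ⟨1, 1, one_pos, one_pos, rfl, rfl⟩

lemma fareyExt_eq :
    FareyExt = {w | ∃ k n : ℕ, 0 < k ∧ 0 < n ∧ k.Coprime n ∧ w = lowerWord k n} := by
  ext w
  constructor
  · rintro ⟨v, hv, c, rfl⟩
    obtain ⟨k, n, hk, hn, hkn, rfl⟩ := exists_lowerWord_of_mem_fareyHat hv
    exact ⟨k + n * c, n, Nat.add_pos_left hk _, hn,
      (Nat.coprime_add_mul_left_left k n c).2 hkn, theta_iterate_lowerWord k n c⟩
  · rintro ⟨k, n, hk, hn, hkn, rfl⟩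
    exact lowerWord_mem_fareyExt hk hn hkn

end FareyWords

/-! ### The largest cyclic permutation of a mechanical word -/

section UpperWord

variable {k n : ℕ}

/-- The digits `⌈(j + 1) k / n⌉ - ⌈j k / n⌉` of the upper mechanical word of slope `k / n`, with
`⌈m / n⌉` written as the natural-number quotient `(m + (n - 1)) / n`. -/
def upperDigit (k n j : ℕ) : ℕ := ((j + 1) * k + (n - 1)) / n - (j * k + (n - 1)) / n

/-- The upper mechanical word of slope `k / n`. -/
def upperWord (k n : ℕ) : List ℕ := (List.range n).map (upperDigit k n)

lemma maxCyc_eq {w v : List ℕ} (hle : ∀ i < w.length, w.rotate i ≤ v)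
    (hmem : ∃ i < w.length, w.rotate i = v) : maxCyc w = v := by
  have hmax : ((List.range w.length).map w.rotate).max? = some v :=
    List.max?_eq_some_iff.2 ⟨by simpa using hmem, by simpa using hle⟩
  rw [maxCyc, List.foldl_max, hmax]
  exact max_eq_right (not_lt.1 (List.not_lt_nil _))

lemma map_range_le_map_range {f g : ℕ → ℕ}
    (h : ∀ j, ∑ i ∈ Finset.range j, f i ≤ ∑ i ∈ Finset.range j, g i) (n : ℕ) :
    (List.range n).map f ≤ (List.range n).map g := by
  rw [← not_lt, List.lt_iff_exists]
  rintro (⟨-, hlength⟩ | ⟨j, _, _, heq, hlt⟩)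
  · simp at hlength
  · simp only [List.getElem_map, List.getElem_range] at heq hlt
    refine (h (j + 1)).not_gt ?_
    rw [Finset.sum_range_succ, Finset.sum_range_succ,
      Finset.sum_congr rfl fun i hi => heq i (Finset.mem_range.1 hi)]
    exact Nat.add_lt_add_left hlt _

lemma add_mul_div_eq_add_mod (hn : 0 < n) (i j : ℕ) :
    (i + j) * k / n = i * k / n + (j * k + i * k % n) / n := by
  have h : (i + j) * k = j * k + i * k % n + n * (i * k / n) := by
    linarith [Nat.mod_add_div (i * k) n]
  rw [h, Nat.add_mul_div_left _ _ hn, add_comm]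

lemma lowerDigit_add (hn : 0 < n) (i j : ℕ) :
    lowerDigit k n (i + j) = ((j + 1) * k + i * k % n) / n - (j * k + i * k % n) / n := by
  rw [lowerDigit, add_assoc, add_mul_div_eq_add_mod hn, add_mul_div_eq_add_mod hn,
    Nat.add_sub_add_left]

lemma lowerDigit_periodic (hn : 0 < n) : Function.Periodic (lowerDigit k n) n := fun j => by
  rw [add_comm, lowerDigit_add hn, Nat.mul_mod_right, add_zero, add_zero, lowerDigit]

lemma exists_upperDigit_eq_lowerDigit (hn : 0 < n) (hkn : k.Coprime n) :
    ∃ i < n, ∀ j, upperDigit k n j = lowerDigit k n (i + j) := by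
  obtain ⟨i, hi, hmod⟩ := Nat.exists_mul_mod_eq_of_coprime (n - 1) hkn hn.ne'
  refine ⟨i, hi, fun j => ?_⟩
  rw [lowerDigit_add hn, mul_comm i, hmod, Nat.mod_eq_of_lt (Nat.sub_one_lt hn.ne'), upperDigit]

lemma sum_range_div_sub_div (k n r j : ℕ) :
    ∑ l ∈ Finset.range j, (((l + 1) * k + r) / n - (l * k + r) / n)
      = (j * k + r) / n - r / n := by
  have hmono : Monotone fun l => (l * k + r) / n := fun _ _ h =>
    Nat.div_le_div_right (Nat.add_le_add_right (Nat.mul_le_mul_right k h) r)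
  simpa using Finset.sum_range_tsub hmono j

lemma sum_lowerDigit_le (hn : 0 < n) (i j : ℕ) :
    ∑ l ∈ Finset.range j, lowerDigit k n (i + l) ≤ ∑ l ∈ Finset.range j, upperDigit k n l := by
  have hr : i * k % n ≤ n - 1 := Nat.le_pred_of_lt (Nat.mod_lt _ hn)
  simp only [lowerDigit_add hn, upperDigit, sum_range_div_sub_div]
  rw [Nat.div_eq_of_lt (Nat.mod_lt _ hn), Nat.div_eq_of_lt (Nat.sub_one_lt hn.ne')]
  exact Nat.div_le_div_right (Nat.add_le_add_left hr _)

lemma rotate_lowerWord (hn : 0 < n) (i : ℕ) :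
    (lowerWord k n).rotate i = (List.range n).map fun j => lowerDigit k n (i + j) := by
  refine List.ext_getElem (by simp) fun j _ _ => ?_
  simp only [List.getElem_rotate, lowerWord, List.getElem_map, List.getElem_range,
    List.length_map, List.length_range]
  rw [(lowerDigit_periodic hn).map_mod_nat, add_comm]

lemma maxCyc_lowerWord (hn : 0 < n) (hkn : k.Coprime n) :
    maxCyc (lowerWord k n) = upperWord k n := by
  obtain ⟨i₀, hi₀, hupper⟩ := exists_upperDigit_eq_lowerDigit hn hkn
  refine maxCyc_eq (fun i _ => ?_) ⟨i₀, by rwa [length_lowerWord], ?_⟩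
  · rw [rotate_lowerWord hn]
    exact map_range_le_map_range (sum_lowerDigit_le hn i) n
  · rw [rotate_lowerWord hn, upperWord, funext hupper]

end UpperWord

/-! ### Values of the sequences attached to a mechanical word -/

section WordValue

variable {β : ℝ} {k n : ℕ}

lemma natCast_div_eq_floor (m n : ℕ) : ((m / n : ℕ) : ℝ) = ⌊(m : ℝ) / n⌋ := by
  rw [← Nat.floor_div_eq_div (K := ℝ), natCast_floor_eq_intCast_floor (by positivity)]

lemma natCast_add_sub_one_div_eq_ceil (hn : 0 < n) (m : ℕ) :
    (((m + (n - 1)) / n : ℕ) : ℝ) = ⌈(m : ℝ) / n⌉ := by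
  have hn' : (0 : ℝ) < n := Nat.cast_pos.2 hn
  have h : ⌈(m : ℝ) / n⌉₊ = (m + (n - 1)) / n := eq_of_forall_ge_iff fun a => by
    rw [Nat.ceil_le, div_le_iff₀ hn', ← Nat.lt_add_one_iff, Nat.div_lt_iff_lt_mul hn, add_mul]
    norm_cast
    lia
  rw [← h, natCast_ceil_eq_intCast_ceil (by positivity)]

lemma cast_lowerDigit (k n i : ℕ) :
    (lowerDigit k n i : ℝ)
      = (⌊((i + 1 : ℕ) : ℝ) * (k / n)⌋ : ℝ) - ⌊(i : ℝ) * (k / n)⌋ := by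
  rw [lowerDigit, Nat.cast_sub (Nat.div_le_div_right (Nat.mul_le_mul_right k i.le_succ)),
    natCast_div_eq_floor, natCast_div_eq_floor]
  simp only [Nat.cast_mul, mul_div_assoc]

lemma cast_upperDigit (hn : 0 < n) (i : ℕ) :
    (upperDigit k n i : ℝ)
      = (⌈((i + 1 : ℕ) : ℝ) * (k / n)⌉ : ℝ) - ⌈(i : ℝ) * (k / n)⌉ := by
  rw [upperDigit, Nat.cast_sub (Nat.div_le_div_right (Nat.add_le_add_right
      (Nat.mul_le_mul_right k i.le_succ) _)), natCast_add_sub_one_div_eq_ceil hn,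
    natCast_add_sub_one_div_eq_ceil hn]
  simp only [Nat.cast_mul, mul_div_assoc]

lemma getD_map_range {j : ℕ} (f : ℕ → ℕ) (hj : j < n) : ((List.range n).map f).getD j 0 = f j := by
  rw [List.getD_eq_getElem _ _ (by simpa using hj), List.getElem_map, List.getElem_range]

lemma perSeq_map_range {f : ℕ → ℕ} (hn : 0 < n) (hf : Function.Periodic f n) :
    perSeq ((List.range n).map f) = f := by
  ext i
  rw [perSeq, List.length_map, List.length_range, getD_map_range f (Nat.mod_lt i hn),
    hf.map_mod_nat]

lemma upperDigit_periodic (hn : 0 < n) (hkn : k.Coprime n) :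
    Function.Periodic (upperDigit k n) n := fun j => by
  obtain ⟨i, -, hupper⟩ := exists_upperDigit_eq_lowerDigit hn hkn
  rw [hupper, hupper, ← add_assoc, lowerDigit_periodic hn]

lemma wplus_map_range (f : ℕ → ℕ) (hn : 0 < n) :
    wplus ((List.range n).map f)
      = (List.range n).map fun i => f i + if i + 1 = n then 1 else 0 := by
  obtain ⟨m, rfl⟩ := Nat.exists_eq_add_one_of_ne_zero hn.ne'
  simpa [wplus, List.range_succ] using fun i (hi : i < m) => hi.ne

lemma cast_wordSeq_wplus_upperWord (hn : 0 < n) (hkn : k.Coprime n) (i : ℕ) :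
    (wordSeq (wplus (upperWord k n)) (perSeq (lowerWord k n)) i : ℝ)
      = ((⌊((i + 1 : ℕ) : ℝ) * (k / n)⌋ : ℝ) + if i + 1 = 0 then 0 else 1)
        - ((⌊(i : ℝ) * (k / n)⌋ : ℝ) + if i = 0 then 0 else 1) := by
  have hdvd {j : ℕ} (hj : j < n) : n ∣ j ↔ j = 0 :=
    ⟨fun h => Nat.eq_zero_of_dvd_of_lt h hj, fun h => h ▸ dvd_zero n⟩
  rw [upperWord, wplus_map_range _ hn, lowerWord, perSeq_map_range hn (lowerDigit_periodic hn),
    wordSeq, List.length_map, List.length_range, if_neg i.succ_ne_zero]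
  rcases lt_or_ge i n with hi | hi
  · have hlast : n ∣ i + 1 ↔ i + 1 = n :=
      ⟨fun h => le_antisymm hi (Nat.le_of_dvd i.succ_pos h), fun h => h ▸ dvd_rfl⟩
    rw [if_pos hi, getD_map_range _ hi, Nat.cast_add, cast_upperDigit hn,
      ceil_natCast_mul_div_of_coprime hn hkn, ceil_natCast_mul_div_of_coprime hn hkn]
    simp only [hlast, hdvd hi, Nat.cast_ite, Nat.cast_one, Nat.cast_zero]
    split_ifs <;> ring
  · rw [if_neg hi.not_gt, if_neg (hn.trans_le hi).ne', ← lowerDigit_periodic hn,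
      Nat.sub_add_cancel hi, cast_lowerDigit, add_sub_add_right_eq_sub]

lemma valSeq_perSeq_maxCyc (hβ : 1 < β) (hn : 0 < n) (hkn : k.Coprime n) :
    valSeq β (perSeq (maxCyc (lowerWord k n))) = upperVal β (k / n) := by
  rw [maxCyc_lowerWord hn hkn, upperWord, perSeq_map_range hn (upperDigit_periodic hn hkn)]
  exact valSeq_eq_abelSum hβ (abelSummable_ceil hβ _) (by simp) (cast_upperDigit hn)

lemma valSeq_wordSeq_wplus (hβ : 1 < β) (hn : 0 < n) (hkn : k.Coprime n) :
    valSeq β (wordSeq (wplus (maxCyc (lowerWord k n))) (perSeq (lowerWord k n)))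
      = lowerVal β (k / n) + 1 / β := by
  rw [maxCyc_lowerWord hn hkn, lowerVal_add_one_div hβ]
  exact valSeq_eq_abelSum hβ (abelSummable_floor_add_ite hβ _) (by simp)
    (cast_wordSeq_wplus_upperWord hn hkn)

end WordValue

/-! ### The bases attached to a mechanical word -/

section UnitBase

variable {β x : ℝ} {c : ℕ → ℕ} {B : ℕ}

/-- The base in which the digit sequence `c` has value `1`. It is meaningful only if there is such
a base, which is then unique for bounded `c`. -/
noncomputable def unitBase (c : ℕ → ℕ) : ℝ :=
  Classical.epsilon fun β : ℝ => 1 < β ∧ valSeq β c = 1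

lemma summable_natCast_div_pow_succ (hβ : 1 < β) (hc : ∀ i, c i ≤ B) :
    Summable fun i : ℕ => (c i : ℝ) / β ^ (i + 1) := by
  have h : AbelSummable β fun i => (c i : ℝ) :=
    .of_le_of_le hβ (abelSummable_const hβ 0) (abelSummable_const hβ B)
      (fun i => Nat.cast_nonneg (c i)) fun i => Nat.cast_le.2 (hc i)
  simpa only [div_div, ← pow_succ] using Summable.div_const h β

lemma strictAntiOn_valSeq (hc : ∀ i, c i ≤ B) (hne : ∃ i, c i ≠ 0) :
    StrictAntiOn (fun β => valSeq β c) (Ioi 1) := fun β (hβ : 1 < β) β' (hβ' : 1 < β') hlt => by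
  obtain ⟨i, hi⟩ := hne
  have hβ0 : 0 < β := one_pos.trans hβ
  have hci : (0 : ℝ) < c i := Nat.cast_pos.2 (Nat.pos_of_ne_zero hi)
  refine (summable_natCast_div_pow_succ hβ' hc).tsum_lt_tsum (i := i) (fun j => ?_)
    (div_lt_div_of_pos_left hci (by positivity) (pow_lt_pow_left₀ hlt hβ0.le i.succ_ne_zero))
    (summable_natCast_div_pow_succ hβ hc)
  exact div_le_div_of_nonneg_left (Nat.cast_nonneg _) (by positivity)
    (pow_le_pow_left₀ hβ0.le hlt.le _)

lemma continuousOn_valSeq (hβ : 1 < β) (hc : ∀ i, c i ≤ B) :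
    ContinuousOn (fun γ => valSeq γ c) (Ici β) := by
  have hβ0 : 0 < β := one_pos.trans hβ
  have hpos {γ : ℝ} (hγ : γ ∈ Ici β) : 0 < γ := hβ0.trans_le hγ
  refine continuousOn_tsum (fun i => ?_) (summable_natCast_div_pow_succ hβ hc) fun i γ hγ => ?_
  · exact continuousOn_const.div (continuousOn_id.pow _) fun γ hγ => (pow_pos (hpos hγ) _).ne'
  · have := hpos hγ
    rw [Real.norm_of_nonneg (by positivity)]
    exact div_le_div_of_nonneg_left (Nat.cast_nonneg _) (by positivity)
      (pow_le_pow_left₀ hβ0.le hγ _)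

lemma exists_valSeq_eq_one (hx : 0 < x) (hc : ∀ i, c i ≤ B)
    (hupper : ∀ β, 1 < β → upperVal β x ≤ valSeq β c)
    (hlower : ∀ β, 1 < β → valSeq β c ≤ lowerVal β x + 1 / β) :
    ∃ γ, 1 < γ ∧ valSeq γ c = 1 := by
  have hone : 1 < 1 + x := lt_add_of_pos_right 1 hx
  have hone' : 1 < 2 * x + 2 := by linarith
  have hleft : 1 ≤ valSeq (1 + x) c := by
    have h := le_upperVal hone x
    rw [add_sub_cancel_left, div_self hx.ne'] at h
    exact h.trans (hupper _ hone)
  have hright : valSeq (2 * x + 2) c ≤ 1 := by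
    refine (hlower _ hone').trans ((add_le_add_left (lowerVal_le hone' x) _).trans ?_)
    have h₁ : x / (2 * x + 2 - 1) ≤ 1 / 2 := by
      rw [div_le_div_iff₀ (by linarith) two_pos]
      linarith
    have h₂ : 1 / (2 * x + 2) ≤ 1 / 2 := one_div_le_one_div_of_le two_pos (by linarith)
    linarith
  obtain ⟨γ, hγ, hγ₁⟩ := intermediate_value_Icc' (by linarith : 1 + x ≤ 2 * x + 2)
    ((continuousOn_valSeq hone hc).mono Icc_subset_Ici_self) ⟨hright, hleft⟩
  exact ⟨γ, hone.trans_le hγ.1, hγ₁⟩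

lemma exists_ne_zero_of_valSeq_eq_one (h : valSeq β c = 1) : ∃ i, c i ≠ 0 := by
  by_contra! h₀
  simp [valSeq, h₀] at h

lemma unitBase_le_iff (hβ : 1 < β) (hc : ∀ i, c i ≤ B) (h : ∃ γ, 1 < γ ∧ valSeq γ c = 1) :
    unitBase c ≤ β ↔ valSeq β c ≤ 1 := by
  obtain ⟨hone, hval⟩ := Classical.epsilon_spec h
  rw [← hval]
  exact ((strictAntiOn_valSeq hc (exists_ne_zero_of_valSeq_eq_one hval)).le_iff_ge hβ hone).symm

lemma le_unitBase_iff (hβ : 1 < β) (hc : ∀ i, c i ≤ B) (h : ∃ γ, 1 < γ ∧ valSeq γ c = 1) :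
    β ≤ unitBase c ↔ 1 ≤ valSeq β c := by
  obtain ⟨hone, hval⟩ := Classical.epsilon_spec h
  rw [← hval]
  exact ((strictAntiOn_valSeq hc (exists_ne_zero_of_valSeq_eq_one hval)).le_iff_ge hone hβ).symm

end UnitBase

section FareyBases

variable {β : ℝ} {k n : ℕ}

lemma getD_le_sum (w : List ℕ) (i : ℕ) : w.getD i 0 ≤ w.sum := by
  rcases lt_or_ge i w.length with hi | hi
  · rw [List.getD_eq_getElem _ _ hi]
    exact List.single_le_sum (fun _ _ => Nat.zero_le _) _ (List.getElem_mem hi)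
  · rw [List.getD_eq_default _ _ hi]
    exact Nat.zero_le _

lemma perSeq_le_sum (w : List ℕ) (i : ℕ) : perSeq w i ≤ w.sum := getD_le_sum w _

lemma wordSeq_perSeq_le_sum_add_sum (w v : List ℕ) (i : ℕ) :
    wordSeq w (perSeq v) i ≤ w.sum + v.sum := by
  rw [wordSeq]
  split_ifs
  · exact (getD_le_sum w i).trans (Nat.le_add_right _ _)
  · exact (perSeq_le_sum v _).trans (Nat.le_add_left _ _)

lemma exists_valSeq_perSeq_maxCyc_eq_one (hk : 0 < k) (hn : 0 < n) (hkn : k.Coprime n) :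
    ∃ γ, 1 < γ ∧ valSeq γ (perSeq (maxCyc (lowerWord k n))) = 1 := by
  have hx : (0 : ℝ) < k / n := by positivity
  refine exists_valSeq_eq_one hx (perSeq_le_sum _) (fun β hβ => ?_) fun β hβ => ?_ <;>
    rw [valSeq_perSeq_maxCyc hβ hn hkn]
  exact upperVal_le_lowerVal_add hβ _

lemma exists_valSeq_wordSeq_wplus_eq_one (hk : 0 < k) (hn : 0 < n) (hkn : k.Coprime n) :
    ∃ γ, 1 < γ ∧
      valSeq γ (wordSeq (wplus (maxCyc (lowerWord k n))) (perSeq (lowerWord k n))) = 1 := by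
  have hx : (0 : ℝ) < k / n := by positivity
  refine exists_valSeq_eq_one hx (wordSeq_perSeq_le_sum_add_sum _ _) (fun β hβ => ?_)
    fun β hβ => ?_ <;> rw [valSeq_wordSeq_wplus hβ hn hkn]
  exact upperVal_le_lowerVal_add hβ _

lemma betaL_lowerWord_le_iff (hβ : 1 < β) (hk : 0 < k) (hn : 0 < n) (hkn : k.Coprime n) :
    betaL (lowerWord k n) ≤ β ↔ upperVal β (k / n) ≤ 1 := by
  rw [← valSeq_perSeq_maxCyc hβ hn hkn]
  exact unitBase_le_iff hβ (perSeq_le_sum _) (exists_valSeq_perSeq_maxCyc_eq_one hk hn hkn)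

lemma eq_betaL_lowerWord_iff (hβ : 1 < β) (hk : 0 < k) (hn : 0 < n) (hkn : k.Coprime n) :
    β = betaL (lowerWord k n) ↔ upperVal β (k / n) = 1 := by
  rw [eq_comm, le_antisymm_iff, le_antisymm_iff, betaL_lowerWord_le_iff hβ hk hn hkn]
  refine and_congr_right' ?_
  rw [← valSeq_perSeq_maxCyc hβ hn hkn]
  exact le_unitBase_iff hβ (perSeq_le_sum _) (exists_valSeq_perSeq_maxCyc_eq_one hk hn hkn)

lemma mem_Jint_lowerWord_iff (hβ : 1 < β) (hk : 0 < k) (hn : 0 < n) (hkn : k.Coprime n) :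
    β ∈ Jint (lowerWord k n) ↔ upperVal β (k / n) ≤ 1 ∧ 1 ≤ lowerVal β (k / n) + 1 / β := by
  rw [Jint, mem_Icc, betaL_lowerWord_le_iff hβ hk hn hkn, ← valSeq_wordSeq_wplus hβ hn hkn]
  exact and_congr_right' (le_unitBase_iff hβ (wordSeq_perSeq_le_sum_add_sum _ _)
    (exists_valSeq_wordSeq_wplus_eq_one hk hn hkn))

lemma mem_EL_iff (hβ : 1 < β) : β ∈ EL ↔ ∃ a, upperVal β a = 1 := by
  rw [EL, Eexc, fareyExt_eq]
  constructor
  · rintro (⟨-, hE⟩ | ⟨_, ⟨k, n, hk, hn, hkn, rfl⟩, hs⟩)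
    · refine (exists_upperVal_eq_one_or_jump hβ).resolve_right ?_
      rintro ⟨k, n, hk, hn, hkn, hupper, hlower⟩
      exact hE (mem_biUnion (t := Jint) ⟨k, n, hk, hn, hkn, rfl⟩
        ((mem_Jint_lowerWord_iff hβ hk hn hkn).2 ⟨hupper.le, hlower⟩))
    · exact ⟨_, (eq_betaL_lowerWord_iff hβ hk hn hkn).1 hs⟩
  · rintro ⟨a, ha⟩
    refine or_iff_not_imp_left.2 fun hE => ?_
    obtain ⟨s, ⟨k, n, hk, hn, hkn, rfl⟩, hs⟩ := mem_iUnion₂.1 (not_not.1 fun h => hE ⟨hβ, h⟩)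
    obtain ⟨hupper, hlower⟩ := (mem_Jint_lowerWord_iff hβ hk hn hkn).1 hs
    refine ⟨_, ⟨k, n, hk, hn, hkn, rfl⟩, (eq_betaL_lowerWord_iff hβ hk hn hkn).2 ?_⟩
    refine hupper.eq_of_not_lt fun hlt => hlower.not_gt ?_
    rw [← ha] at hlt
    exact (lowerVal_add_lt_upperVal hβ ((upperVal_strictMono hβ).lt_iff_lt.1 hlt)).trans_eq ha

end FareyBases

/-- For all `β > 1`, `τ(β) ≤ 1 - 1/β`, with equality iff
`β ∈ E_L = E ∪ {β_ℓ^s : s ∈ F_e}`. -/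
theorem tau_le_one_sub_inv (β : ℝ) (hβ : 1 < β) :
    tau β ≤ 1 - 1 / β ∧ (tau β = 1 - 1 / β ↔ β ∈ EL) :=
  ⟨tau_le_one_sub_one_div hβ, (tau_eq_one_sub_one_div_iff hβ).trans (mem_EL_iff hβ).symm⟩
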